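/- arXiv:2106.05821 — 2 statements merged into one kernel-verified Lean document; each statement's English description precedes it below -/
import Mathlib

section
/- Let G be a group containing a free subgroup F of finite index, and let A and B be subgroups of G. Then r̄k(A ∩ B) ≤ [G:F] · r̄k(A) · r̄k(B), where r̄k denotes the virtual reduced rank. -/
/-- `r : ℚ` is the virtual reduced rank of the group `H`: there is a finitely generated
free subgroup `K` of finite index in `H` such that `r = max (0, rank K - 1) / [H : K]`,
where `rank K` is the minimal cardinality of a generating set of `K`.
(This value does not depend on the choice of `K`.) -/
def IsVirtRedRank (H : Type*) [Group H] (r : ℚ) : Prop :=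
  ∃ K : Subgroup H, K.FiniteIndex ∧ IsFreeGroup K ∧
    ∃ hfg : Group.FG K, r = ((@Group.rank K _ hfg - 1 : ℕ) : ℚ) / (K.index : ℚ)

/-!
Order the free group `F` on the left. Its Cayley tree then carries `F`-invariant orders on the
vertices and on the edges. In a subtree, call an edge a bridge if its two ends lie in infinite
components of the subgraph of the smaller edges. When the edges of an infinite subtree are added in
increasing order, a finite component bears the name of its greatest vertex, every edge which is not
a bridge puts an end to exactly one name, and every name comes to an end. So if a free group `C` of
finite rank acts freely on the subtree with finitely many orbits, then the number of orbits of
bridges is that of edges minus that of vertices, which is `rank C - 1`.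

Since this number does not depend on the subtree, the subtrees spanned by the orbits of `C ≤ F` all
have the same bridges. Enlarging a subtree enlarges its set of bridges, so a bridge for `A ∩ B` is
one for `A` and for `B`. As the action is free, an orbit of `A ∩ B` is determined by the orbits of
`A` and `B` which contain it, and the inequality follows. In the virtual case, the same count is
carried out in each of the `[G : F]` cosets of `F`, for the intersections of the subgroups with the
normal core of `F`.
-/

/-! ### Left orders on free groups -/

namespace FreeGroupOrder

open FreeGroup

section Comparison

variable {P : Type*} [LinearOrder P]

/-- The sign of the comparison of two elements, read as `0` when one of them is missing. -/
def cmpSign : Option P → Option P → ℤ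
  | some p, some q => if p < q then 1 else if q < p then -1 else 0
  | _, _ => 0

theorem cmpSign_swap (p q : Option P) : cmpSign q p = -cmpSign p q := by
  rcases p with _ | p <;> rcases q with _ | q <;> try rfl
  simp only [cmpSign]
  split_ifs <;> first | rfl | (exfalso; order)

theorem odd_cmpSign {p q : P} (h : p ≠ q) : Odd (cmpSign (some p) (some q)) := by
  rcases lt_or_gt_of_ne h with h | h
  · simp [cmpSign, h]
  · simp [cmpSign, h, h.not_gt]

theorem abs_cmpSign_sub_sub_le (p q r : Option P) :
    |cmpSign p r - cmpSign p q - cmpSign q r| ≤ 1 := by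
  rcases p with _ | p <;> rcases q with _ | q <;> rcases r with _ | r <;>
    simp only [cmpSign] <;> try split_ifs
  all_goals first | (exfalso; order) | simp

end Comparison

variable {α : Type*}

theorem getLast?_invRev (L : List (α × Bool)) :
    (invRev L).getLast? = L.head?.map fun l => (l.1, !l.2) := by
  simp [invRev]

theorem exists_append_of_isReduced {L₁ : List (α × Bool)} (h₁ : IsReduced L₁) :
    ∀ {L₂ : List (α × Bool)}, IsReduced L₂ →
      ∃ p q r, L₁ = p ++ q ∧ L₂ = invRev q ++ r ∧ IsReduced (p ++ r) := by
  induction L₁ using List.reverseRecOn with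
  | nil => exact fun {L₂} h₂ => ⟨[], [], L₂, rfl, rfl, h₂⟩
  | append_singleton L l ih =>
    intro L₂ h₂
    rcases L₂ with _ | ⟨m, M⟩
    · exact ⟨L ++ [l], [], [], by simp, rfl, by simpa using h₁⟩
    by_cases hlm : l.1 = m.1 → l.2 = m.2
    · refine ⟨L ++ [l], [], m :: M, by simp, rfl, List.IsChain.append h₁ h₂ ?_⟩
      simpa using hlm
    · obtain ⟨p, q, r, rfl, rfl, hpr⟩ := ih h₁.left_of_append h₂.tail
      have hm : m = (l.1, !l.2) := by
        rw [Classical.not_imp] at hlm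
        exact Prod.ext hlm.1.symm (by simpa using Bool.eq_not_of_ne (Ne.symm hlm.2))
      exact ⟨p, q ++ [l], r, by simp, by simp [invRev, hm], hpr⟩

theorem exists_toWord_mul [DecidableEq α] (u v : FreeGroup α) :
    ∃ p q r, u.toWord = p ++ q ∧ v.toWord = invRev q ++ r ∧ (u * v).toWord = p ++ r := by
  obtain ⟨p, q, r, hu, hv, hpr⟩ :=
    exists_append_of_isReduced (isReduced_toWord (x := u)) (isReduced_toWord (x := v))
  refine ⟨p, q, r, hu, hv, ?_⟩
  have huv : u * v = mk (p ++ r) := by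
    rw [← u.mk_toWord, ← v.mk_toWord, hu, hv]
    simp only [← mul_mk, ← inv_mk]
    group
  rw [huv, toWord_mk, hpr.reduce_eq]

/-- The exponent of a letter. -/
def letterSign (l : α × Bool) : ℤ := if l.2 then 1 else -1

theorem odd_letterSign (l : α × Bool) : Odd (letterSign l) := by
  rcases l with ⟨a, _ | _⟩ <;> simp [letterSign]

theorem letterSign_not (l : α × Bool) : letterSign (l.1, !l.2) = -letterSign l := by
  rcases l with ⟨a, _ | _⟩ <;> rfl

variable [LinearOrder α]

/-- The turn of a path in the Cayley tree which enters a vertex along the letter `l` and leaves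
it along `m`: the direction from which it comes is compared with the one in which it goes. -/
def turn (l m : Option (α × Bool)) : ℤ :=
  cmpSign (l.map fun l => toLex (l.1, !l.2)) (m.map toLex)

/-- The weight of a word: the exponents of its letters plus the turns between them. -/
def weight : List (α × Bool) → ℤ
  | [] => 0
  | l :: L => letterSign l + turn (some l) L.head? + weight L

theorem weight_append (p q : List (α × Bool)) :
    weight (p ++ q) = weight p + turn p.getLast? q.head? + weight q := by
  induction p with
  | nil => simp [weight, turn, cmpSign]
  | cons l p ih =>
    rcases p with _ | ⟨m, p⟩
    · simp [weight, turn, cmpSign]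
    · simp only [List.cons_append, weight, List.head?_cons, List.getLast?_cons_cons] at ih ⊢
      linear_combination ih

theorem turn_not_not (l m : Option (α × Bool)) :
    turn (m.map fun m => (m.1, !m.2)) (l.map fun l => (l.1, !l.2)) = -turn l m := by
  simp [turn, ← cmpSign_swap, Function.comp_def]

theorem weight_invRev (L : List (α × Bool)) : weight (invRev L) = -weight L := by
  induction L with
  | nil => rfl
  | cons l L ih =>
    have hinv : invRev (l :: L) = invRev L ++ [(l.1, !l.2)] := by simp [invRev]
    have hturn := turn_not_not (some l) L.head?
    have hend : turn (some (l.1, !l.2)) none = 0 := by simp [turn, cmpSign]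
    rw [hinv, weight_append, getLast?_invRev, ih]
    simp only [weight, letterSign_not, List.head?_cons, List.head?_nil, hend]
    rw [Option.map_some] at hturn
    linear_combination hturn

theorem odd_weight {L : List (α × Bool)} (hL : IsReduced L) (hne : L ≠ []) : Odd (weight L) := by
  induction L with
  | nil => exact absurd rfl hne
  | cons l L ih =>
    rcases L with _ | ⟨m, L⟩
    · simpa [weight, turn, cmpSign] using odd_letterSign l
    · obtain ⟨hlm, hmL⟩ := List.isChain_cons_cons.1 hL
      have hturn : Odd (turn (some l) (some m)) := odd_cmpSign fun h => by
        obtain rfl := toLex.injective h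
        simp at hlm
      exact ((odd_letterSign l).add_odd hturn).add_odd (ih hmL (by simp))

theorem weight_toWord_inv (u : FreeGroup α) : weight u⁻¹.toWord = -weight u.toWord := by
  rw [toWord_inv, weight_invRev]

theorem abs_weight_toWord_mul_le (u v : FreeGroup α) :
    |weight (u * v).toWord - weight u.toWord - weight v.toWord| ≤ 1 := by
  obtain ⟨p, q, r, hu, hv, huv⟩ := exists_toWord_mul u v
  have hq : turn (invRev q).getLast? r.head? = cmpSign (q.head?.map toLex) (r.head?.map toLex) := by
    simp [getLast?_invRev, turn, Function.comp_def]
  rw [hu, hv, huv, weight_append, weight_append, weight_append, weight_invRev, hq]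
  convert abs_cmpSign_sub_sub_le (p.getLast?.map fun l => toLex (l.1, !l.2))
    (q.head?.map toLex) (r.head?.map toLex) using 2
  simp only [turn]
  ring

theorem weight_toWord_mul_pos {u v : FreeGroup α} (hu : 0 < weight u.toWord)
    (hv : 0 < weight v.toWord) : 0 < weight (u * v).toWord := by
  have := abs_le.1 (abs_weight_toWord_mul_le u v)
  lia

/-- Since the weight is an odd quasimorphism of defect at most `1` with odd values outside `1`, the
elements of positive weight form the positive cone of a left order. -/
theorem isStrictTotalOrder_weight :
    IsStrictTotalOrder (FreeGroup α) fun u v => 0 < weight (u⁻¹ * v).toWord where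
  irrefl u := by simp [weight]
  trans u v w huv hvw := by simpa [mul_assoc] using weight_toWord_mul_pos huv hvw
  trichotomous u v huv hvu := by
    by_contra hne
    have hinv := weight_toWord_inv (u⁻¹ * v)
    rw [mul_inv_rev, inv_inv] at hinv
    have hodd : Odd (weight (u⁻¹ * v).toWord) :=
      odd_weight isReduced_toWord (by simpa [inv_mul_eq_one] using hne)
    obtain ⟨k, hk⟩ := hodd
    lia

end FreeGroupOrder

theorem exists_linearOrder_mulLeftStrictMono (F : Type*) [Group F] [IsFreeGroup F] :
    ∃ _ : LinearOrder F, MulLeftStrictMono F := by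
  classical
  obtain ⟨ι, ⟨b⟩⟩ := IsFreeGroup.nonempty_basis (G := F)
  let _ : LinearOrder ι := linearOrderOfSTO WellOrderingRel
  have := FreeGroupOrder.isStrictTotalOrder_weight (α := ι)
  let _ : LinearOrder (FreeGroup ι) :=
    linearOrderOfSTO fun u v => 0 < FreeGroupOrder.weight (u⁻¹ * v).toWord
  refine ⟨LinearOrder.lift' b.repr b.repr.injective, ⟨fun c x y hxy => ?_⟩⟩
  change 0 < FreeGroupOrder.weight ((b.repr x)⁻¹ * b.repr y).toWord at hxy
  change 0 < FreeGroupOrder.weight ((b.repr (c * x))⁻¹ * b.repr (c * y)).toWord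
  rwa [map_mul, map_mul, mul_inv_rev, mul_assoc, inv_mul_cancel_left]

/-! ### Orbits of free actions -/

section Images

variable {X Y P Q : Type*} {S : Set X}

theorem encard_image_le_of_rel {T : Set Y} {p : X → P} {q : Y → Q} (R : X → Y → Prop)
    (hex : ∀ x ∈ S, ∃ y ∈ T, R x y)
    (hR : ∀ x x' y y', R x y → R x' y' → q y = q y' → p x = p x') :
    (p '' S).encard ≤ (q '' T).encard := by
  choose f hfT hf using hex
  choose s hsS hs using fun a : p '' S => a.2
  let φ : p '' S → q '' T := fun a => ⟨q (f (s a) (hsS a)), _, hfT _ _, rfl⟩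
  have hφ : Function.Injective φ := fun a a' haa' => Subtype.ext <| by
    rw [← hs a, ← hs a']
    exact hR _ _ _ _ (hf _ _) (hf _ _) (congrArg Subtype.val haa')
  exact Function.Embedding.encard_le ⟨φ, hφ⟩

theorem encard_image_eq_of_iff {p : X → P} {q : X → Q}
    (h : ∀ x ∈ S, ∀ y ∈ S, p x = p y ↔ q x = q y) : (p '' S).encard = (q '' S).encard :=
  le_antisymm
    (encard_image_le_of_rel (fun x y => x = y ∧ x ∈ S) (fun x hx => ⟨x, hx, rfl, hx⟩)
      fun _ _ _ _ ⟨hxy, hx⟩ ⟨hxy', hx'⟩ hq => (h _ hx _ hx').2 (by rwa [hxy, hxy']))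
    (encard_image_le_of_rel (fun x y => x = y ∧ x ∈ S) (fun x hx => ⟨x, hx, rfl, hx⟩)
      fun _ _ _ _ ⟨hxy, hx⟩ ⟨hxy', hx'⟩ hp => (h _ hx _ hx').1 (by rwa [hxy, hxy']))

end Images

section Orbits

open scoped Pointwise

variable (Γ : Type*) {X : Type*} [Group Γ] [MulAction Γ X] {S T : Set X}

/-- The orbit of a point, as an element of the space of orbits. -/
def orbitClass (x : X) : MulAction.orbitRel.Quotient Γ X := Quotient.mk _ x

/-- The set of orbits of `Γ` which meet `S`; its cardinality `(orbits Γ S).encard` is the number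
of orbits in `S` when `S` is invariant. -/
def orbits (S : Set X) : Set (MulAction.orbitRel.Quotient Γ X) := orbitClass Γ '' S

variable {Γ}

theorem orbitClass_eq_iff {x y : X} : orbitClass Γ x = orbitClass Γ y ↔ ∃ g : Γ, g • x = y := by
  rw [eq_comm]
  exact Quotient.eq.trans (MulAction.orbitRel_apply.trans MulAction.mem_orbit_iff)

theorem orbitClass_smul (g : Γ) (x : X) : orbitClass Γ (g • x) = orbitClass Γ x :=
  (orbitClass_eq_iff.2 ⟨g, rfl⟩).symm

theorem orbitClass_mem_orbits_of_mem {x : X} (hx : x ∈ S) : orbitClass Γ x ∈ orbits Γ S :=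
  ⟨x, hx, rfl⟩

theorem orbitClass_mem_orbits (hS : ∀ g : Γ, g • S = S) {x : X} :
    orbitClass Γ x ∈ orbits Γ S ↔ x ∈ S := by
  refine ⟨?_, orbitClass_mem_orbits_of_mem⟩
  rintro ⟨y, hy, hyx⟩
  obtain ⟨g, rfl⟩ := orbitClass_eq_iff.1 hyx
  exact hS g ▸ Set.smul_mem_smul_set hy

theorem finite_orbits_of_subset_smul {K : Set X} (hK : K.Finite)
    (hS : ∀ x ∈ S, ∃ g : Γ, ∃ y ∈ K, g • y = x) : (orbits Γ S).Finite := by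
  refine (hK.image (orbitClass Γ)).subset ?_
  rintro _ ⟨x, hx, rfl⟩
  obtain ⟨g, y, hy, rfl⟩ := hS x hx
  exact ⟨y, hy, (orbitClass_smul g y).symm⟩

theorem exists_finite_smul_eq (hS : (orbits Γ S).Finite) :
    ∃ K ⊆ S, K.Finite ∧ ∀ x ∈ S, ∃ g : Γ, ∃ y ∈ K, g • y = x := by
  obtain ⟨K, hKS, hK, hKT⟩ := Set.exists_subset_image_finite_and.1 ⟨_, subset_rfl, hS, rfl⟩
  refine ⟨K, hKS, hK, fun x hx => ?_⟩
  obtain ⟨y, hy, hyx⟩ : orbitClass Γ x ∈ orbitClass Γ '' K := hKT ▸ ⟨x, hx, rfl⟩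
  obtain ⟨g, rfl⟩ := orbitClass_eq_iff.1 hyx
  exact ⟨g, y, hy, rfl⟩

theorem encard_orbits_le_of_rel {Y : Type*} [MulAction Γ Y] {T : Set Y} (R : X → Y → Prop)
    (hsmul : ∀ (g : Γ) x y, R x y → R (g • x) (g • y)) (huniq : ∀ x x' y, R x y → R x' y → x = x')
    (hex : ∀ x ∈ S, ∃ y ∈ T, R x y) : (orbits Γ S).encard ≤ (orbits Γ T).encard := by
  refine encard_image_le_of_rel R hex fun x x' y y' hxy hxy' hyy' => ?_
  obtain ⟨g, rfl⟩ := orbitClass_eq_iff.1 hyy'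
  exact orbitClass_eq_iff.2 ⟨g, huniq _ _ _ (hsmul g _ _ hxy) hxy'⟩

theorem encard_orbits_add_encard_orbits_diff (hS : ∀ g : Γ, g • S = S) (hST : S ⊆ T) :
    (orbits Γ S).encard + (orbits Γ (T \ S)).encard = (orbits Γ T).encard := by
  have hdisj : Disjoint (orbits Γ S) (orbits Γ (T \ S)) := by
    rw [Set.disjoint_right]
    rintro _ ⟨x, hx, rfl⟩ hxS
    exact hx.2 ((orbitClass_mem_orbits hS).1 hxS)
  rw [← Set.encard_union_eq hdisj, orbits, orbits, ← Set.image_union, Set.union_sdiff_cancel hST,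
    orbits]

theorem eq_of_subset_of_encard_orbits_le (hS : ∀ g : Γ, g • S = S) (hST : S ⊆ T)
    (hfin : (orbits Γ T).Finite) (hle : (orbits Γ T).encard ≤ (orbits Γ S).encard) : S = T := by
  have horb : orbits Γ S = orbits Γ T :=
    (hfin.subset (Set.image_mono hST)).eq_of_subset_of_encard_le (Set.image_mono hST) hle
  exact hST.antisymm fun x hx => (orbitClass_mem_orbits hS).1 (horb ▸ ⟨x, hx, rfl⟩)

theorem encard_orbits_eq_sum {Q : Type*} [Fintype Q] (p : X → Q)
    (hp : ∀ (g : Γ) x, x ∈ S → p (g • x) = p x) :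
    (orbits Γ S).encard = ∑ q, (orbits Γ {x ∈ S | p x = q}).encard := by
  have hunion : orbits Γ S = ⋃ q, orbits Γ {x ∈ S | p x = q} := by
    ext o
    simp [orbits]
  have hdisj : Pairwise (Function.onFun Disjoint fun q => orbits Γ {x ∈ S | p x = q}) := by
    refine fun q q' hqq' => Set.disjoint_left.2 ?_
    rintro _ ⟨x, hx, rfl⟩ ⟨y, hy, hxy⟩
    obtain ⟨g, rfl⟩ := orbitClass_eq_iff.1 hxy
    exact hqq' (by rw [← hx.2, hp g y hy.1, hy.2])
  rw [hunion, Set.encard_iUnion_of_finite hdisj, finsum_eq_sum_of_fintype]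

theorem encard_orbits_image {Δ Y : Type*} [Group Δ] [MulAction Δ Y] {φ : Γ → Δ}
    (hφ : Function.Surjective φ) {j : X → Y} (hj : Function.Injective j)
    (hsmul : ∀ g x, j (g • x) = φ g • j x) (S : Set X) :
    (orbits Δ (j '' S)).encard = (orbits Γ S).encard := by
  rw [orbits, Set.image_image]
  refine encard_image_eq_of_iff fun x _ y _ => ?_
  simp only [orbitClass_eq_iff, hφ.exists, ← hsmul, hj.eq_iff]

theorem exists_equivariant_map [IsCancelSMul Γ X] :
    ∃ s : X → Γ, ∀ (g : Γ) x, s (g • x) = g * s x := by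
  have hrep (x : X) : ∃ g : Γ, g • (orbitClass Γ x).out = x :=
    orbitClass_eq_iff.1 (Quotient.out_eq _)
  choose s hs using hrep
  refine ⟨s, fun g x => IsCancelSMul.right_cancel _ _ (orbitClass Γ x).out ?_⟩
  have hgx := hs (g • x)
  rw [orbitClass_smul] at hgx
  rw [hgx, mul_smul, hs]

theorem finite_setOf_mem_of_finite_orbits {Y : Type*} [MulAction Γ Y] [IsCancelSMul Γ Y] {f : X → Y}
    (hf : ∀ (g : Γ) x, f (g • x) = g • f x) (hS : (orbits Γ S).Finite) {U : Set Y}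
    (hU : U.Finite) : {x ∈ S | f x ∈ U}.Finite := by
  have hfiber (u : Y) : {x ∈ S | f x = u}.Finite := by
    refine Set.Finite.of_finite_image (f := orbitClass Γ)
      (hS.subset (Set.image_mono fun x hx => hx.1)) ?_
    rintro x ⟨-, rfl⟩ x' ⟨-, hx'⟩ hxx'
    obtain ⟨g, rfl⟩ := orbitClass_eq_iff.1 hxx'
    rw [hf] at hx'
    rw [IsCancelSMul.eq_one_of_smul hx', one_smul]
  exact (hU.biUnion fun u _ => hfiber u).subset fun x hx => Set.mem_biUnion hx.2 ⟨hx.1, rfl⟩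

theorem encard_orbits_subgroup [IsCancelSMul Γ X] (H : Subgroup Γ)
    (hS : ∀ g : Γ, g • S = S) :
    (orbits H S).encard = (orbits Γ S).encard * ENat.card (Γ ⧸ H) := by
  obtain ⟨s, hs⟩ := exists_equivariant_map (Γ := Γ) (X := X)
  have hpair : (orbits H S).encard =
      ((fun x => (orbitClass Γ x, (↑(s x)⁻¹ : Γ ⧸ H))) '' S).encard := by
    refine encard_image_eq_of_iff fun x _ y _ => ?_
    rw [Prod.mk.injEq, orbitClass_eq_iff, orbitClass_eq_iff, eq_comm, QuotientGroup.eq, inv_inv]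
    constructor
    · rintro ⟨h, rfl⟩
      exact ⟨⟨h, rfl⟩, by simp [Subgroup.smul_def, hs]⟩
    · rintro ⟨⟨g, rfl⟩, hg⟩
      exact ⟨⟨g, by simpa [hs] using hg⟩, rfl⟩
  have himage : (fun x => (orbitClass Γ x, (↑(s x)⁻¹ : Γ ⧸ H))) '' S =
      orbits Γ S ×ˢ Set.univ := by
    ext ⟨o, q⟩
    simp only [Set.mem_image, Set.mem_prod, Set.mem_univ, and_true, Prod.mk.injEq, orbits]
    refine ⟨fun ⟨x, hx, ho, _⟩ => ⟨x, hx, ho⟩, ?_⟩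
    rintro ⟨x, hx, rfl⟩
    obtain ⟨g, rfl⟩ := QuotientGroup.mk_surjective q
    exact ⟨(g⁻¹ * (s x)⁻¹) • x, hS (g⁻¹ * (s x)⁻¹) ▸ Set.smul_mem_smul_set hx,
      orbitClass_smul _ x, by simp [hs]⟩
  rw [hpair, himage, Set.encard_prod, Set.encard_univ]

theorem encard_orbits_inf_le [IsCancelSMul Γ X] (A B : Subgroup Γ) {U : Set X} (hUS : U ⊆ S)
    (hUT : U ⊆ T) :
    (orbits ↥(A ⊓ B) U).encard ≤ (orbits A S).encard * (orbits B T).encard := by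
  have hpair : (orbits ↥(A ⊓ B) U).encard =
      ((fun x => (orbitClass A x, orbitClass B x)) '' U).encard := by
    refine encard_image_eq_of_iff fun x _ y _ => ?_
    rw [Prod.mk.injEq, orbitClass_eq_iff, orbitClass_eq_iff, orbitClass_eq_iff]
    constructor
    · rintro ⟨⟨g, hgA, hgB⟩, rfl⟩
      exact ⟨⟨⟨g, hgA⟩, rfl⟩, ⟨⟨g, hgB⟩, rfl⟩⟩
    · rintro ⟨⟨⟨a, ha⟩, rfl⟩, ⟨⟨b, hb⟩, hba⟩⟩
      obtain rfl : b = a := IsCancelSMul.right_cancel _ _ _ hba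
      exact ⟨⟨b, ha, hb⟩, rfl⟩
  rw [hpair, ← Set.encard_prod]
  refine Set.encard_le_encard ?_
  rintro _ ⟨x, hx, rfl⟩
  exact ⟨⟨x, hUS hx, rfl⟩, ⟨x, hUT hx, rfl⟩⟩

end Orbits

/-! ### Oriented graphs, trees and hulls -/

/-- An oriented graph, possibly with loops and multiple edges, on the vertices `V` with edges `E`.
Its subgraphs are sets of edges. -/
structure OrientedGraph (V E : Type*) where
  /-- The source of an edge. -/
  src : E → V
  /-- The target of an edge. -/
  tgt : E → V

namespace OrientedGraph

variable {V E : Type*} {G : OrientedGraph V E} {L L' : Set E} {e : E} {p q v w x y : V}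

section Components

/-- The connected component of `v` in the subgraph with edge set `L` and all the vertices. -/
def comp (G : OrientedGraph V E) (L : Set E) (v : V) : Set V :=
  {w | Relation.EqvGen (fun x y => ∃ e ∈ L, G.src e = x ∧ G.tgt e = y) v w}

/-- The edge `e` joins `p` and `q`, in one of the two directions. -/
def Ends (G : OrientedGraph V E) (e : E) (p q : V) : Prop :=
  (G.src e = p ∧ G.tgt e = q) ∨ (G.src e = q ∧ G.tgt e = p)

theorem ends_src_tgt : G.Ends e (G.src e) (G.tgt e) := Or.inl ⟨rfl, rfl⟩

theorem Ends.symm (h : G.Ends e p q) : G.Ends e q p := Or.symm h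

theorem mem_comp_self : v ∈ G.comp L v := Relation.EqvGen.refl v

theorem mem_comp_comm : w ∈ G.comp L v ↔ v ∈ G.comp L w :=
  ⟨Relation.EqvGen.symm _ _, Relation.EqvGen.symm _ _⟩

theorem comp_eq_of_mem (h : w ∈ G.comp L v) : G.comp L w = G.comp L v :=
  Set.ext fun _ => ⟨h.trans _ _ _, (mem_comp_comm.1 h).trans _ _ _⟩

theorem mem_comp_iff_eq : w ∈ G.comp L v ↔ G.comp L w = G.comp L v :=
  ⟨comp_eq_of_mem, fun h => h ▸ mem_comp_self⟩

theorem comp_mono (h : L ⊆ L') : G.comp L v ⊆ G.comp L' v := fun _ hw =>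
  Relation.EqvGen.mono (fun _ _ ⟨e, he, hxy⟩ => ⟨e, h he, hxy⟩) _ _ hw

theorem Ends.mem_comp (h : G.Ends e p q) (he : e ∈ L) : q ∈ G.comp L p := by
  have hst : G.tgt e ∈ G.comp L (G.src e) := Relation.EqvGen.rel _ _ ⟨e, he, rfl, rfl⟩
  rcases h with ⟨rfl, rfl⟩ | ⟨rfl, rfl⟩
  · exact hst
  · exact mem_comp_comm.1 hst

theorem Ends.mem_comp_iff (h : G.Ends e p q) (he : e ∈ L) : p ∈ G.comp L v ↔ q ∈ G.comp L v := by
  rw [mem_comp_iff_eq, mem_comp_iff_eq, comp_eq_of_mem (h.mem_comp he)]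

theorem comp_subset {U : Set V} (hU : ∀ e ∈ L, G.src e ∈ U ↔ G.tgt e ∈ U) (hv : v ∈ U) :
    G.comp L v ⊆ U := by
  have hiff (x y : V) (hxy : y ∈ G.comp L x) : x ∈ U ↔ y ∈ U := by
    induction hxy with
    | rel x y h => obtain ⟨e, he, rfl, rfl⟩ := h; exact hU e he
    | refl x => rfl
    | symm x y _ ih => exact ih.symm
    | trans x y z _ _ ih ih' => exact ih.trans ih'
  exact fun w hw => (hiff v w hw).1 hv

theorem exists_finite_mem_comp (h : y ∈ G.comp L x) :
    ∃ J ⊆ L, J.Finite ∧ y ∈ G.comp J x := by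
  induction h with
  | rel x y h =>
    obtain ⟨e, he, rfl, rfl⟩ := h
    exact ⟨{e}, by simpa, Set.finite_singleton e, ends_src_tgt.mem_comp rfl⟩
  | refl x => exact ⟨∅, Set.empty_subset L, Set.finite_empty, mem_comp_self⟩
  | symm x y _ ih =>
    obtain ⟨J, hJL, hJ, hxy⟩ := ih
    exact ⟨J, hJL, hJ, mem_comp_comm.1 hxy⟩
  | trans x y z _ _ ih ih' =>
    obtain ⟨J, hJL, hJ, hxy⟩ := ih
    obtain ⟨J', hJL', hJ', hyz⟩ := ih'
    exact ⟨J ∪ J', Set.union_subset hJL hJL', hJ.union hJ',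
      (comp_mono Set.subset_union_left hxy).trans _ _ _ (comp_mono Set.subset_union_right hyz)⟩

theorem mem_comp_insert (h : y ∈ G.comp (insert e L) x) :
    y ∈ G.comp L x ∨ ∃ p q, G.Ends e p q ∧ p ∈ G.comp L x ∧ q ∈ G.comp L y := by
  induction h with
  | rel x y h =>
    obtain ⟨f, rfl | hf, rfl, rfl⟩ := h
    · exact Or.inr ⟨_, _, ends_src_tgt, mem_comp_self, mem_comp_self⟩
    · exact Or.inl (ends_src_tgt.mem_comp hf)
  | refl x => exact Or.inl mem_comp_self
  | symm x y _ ih =>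
    exact ih.imp mem_comp_comm.1 fun ⟨p, q, hpq, hp, hq⟩ => ⟨q, p, hpq.symm, hq, hp⟩
  | trans x y z _ _ ih ih' =>
    simp only [mem_comp_iff_eq] at ih ih' ⊢
    rcases ih with hxy | ⟨p, q, hpq, hp, hq⟩ <;> rcases ih' with hyz | ⟨p', q', hpq', hp', hq'⟩
    · exact Or.inl (hyz.trans hxy)
    · exact Or.inr ⟨p', q', hpq', hp'.trans hxy, hq'⟩
    · exact Or.inr ⟨p, q, hpq, hp, hq.trans hyz.symm⟩
    · rcases hpq with ⟨rfl, rfl⟩ | ⟨rfl, rfl⟩ <;> rcases hpq' with ⟨rfl, rfl⟩ | ⟨rfl, rfl⟩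
      · exact Or.inr ⟨_, _, ends_src_tgt, hp, hq'⟩
      · exact Or.inl (hq'.symm.trans hp)
      · exact Or.inl (hq'.symm.trans hp)
      · exact Or.inr ⟨_, _, ends_src_tgt.symm, hp, hq'⟩

theorem comp_insert_subset (hpq : G.Ends e p q) (hp : p ∈ G.comp L v) :
    G.comp (insert e L) v ⊆ G.comp L v ∪ G.comp L q := by
  intro w hw
  obtain hw | ⟨p', q', hpq', -, hq'⟩ := mem_comp_insert hw
  · exact Or.inl hw
  have hcase : q' = q ∨ q' = p := by
    obtain ⟨rfl, rfl⟩ | ⟨rfl, rfl⟩ := hpq <;> obtain ⟨-, rfl⟩ | ⟨rfl, -⟩ := hpq' <;> simp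
  obtain rfl | rfl := hcase
  · exact Or.inr (mem_comp_comm.1 hq')
  · exact Or.inl (comp_eq_of_mem hp ▸ mem_comp_comm.1 hq')

end Components

section Trees

/-- A tree: a connected graph all of whose rational `1`-cochains are coboundaries. The second
condition replaces the absence of circuits; in this form it is easy to check on a Cayley graph,
and it is what the computation of the Euler characteristic needs. -/
structure IsTree (G : OrientedGraph V E) : Prop where
  mem_comp_univ : ∀ v w, w ∈ G.comp Set.univ v
  exists_primitive : ∀ φ : E → ℚ, ∃ Φ : V → ℚ, ∀ e, Φ (G.tgt e) = Φ (G.src e) + φ e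

theorem IsTree.notMem_comp (hG : G.IsTree) (hpq : G.Ends e p q) (he : e ∉ L) :
    q ∉ G.comp L p := by
  classical
  obtain ⟨Φ, hΦ⟩ := hG.exists_primitive (Pi.single e 1)
  have hconst : G.comp L p ⊆ {v | Φ v = Φ p} := comp_subset (fun f hf => by
    have hfe : f ≠ e := fun h => he (h ▸ hf)
    simp [hΦ f, hfe]) rfl
  have hjump := hΦ e
  rw [Pi.single_eq_same] at hjump
  intro hq
  have hqp : Φ q = Φ p := hconst hq
  rcases hpq with ⟨rfl, rfl⟩ | ⟨rfl, rfl⟩ <;> linarith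

/-- In a tree, `hull Y` is the edge set of the smallest subtree containing `Y`. -/
def hull (G : OrientedGraph V E) (Y : Set V) : Set E :=
  {e | ∃ x ∈ Y, ∃ y ∈ Y, y ∉ G.comp {e}ᶜ x}

variable {Y Y' : Set V}

theorem hull_mono (h : Y ⊆ Y') : G.hull Y ⊆ G.hull Y' :=
  fun _ ⟨x, hx, y, hy, hxy⟩ => ⟨x, h hx, y, h hy, hxy⟩

theorem hull_subset_of_subset_comp (h : Y ⊆ G.comp L v) : G.hull Y ⊆ L := by
  rintro e ⟨x, hx, y, hy, hxy⟩
  by_contra he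
  refine hxy (comp_mono (Set.subset_compl_singleton_iff.2 he) ?_)
  rw [comp_eq_of_mem (h hx)]
  exact h hy

theorem IsTree.mem_comp_hull (hG : G.IsTree) (hx : x ∈ Y) (hy : y ∈ Y) :
    y ∈ G.comp (G.hull Y) x := by
  classical
  obtain ⟨J₀, -, hJ₀, hxy₀⟩ := exists_finite_mem_comp (hG.mem_comp_univ x y)
  obtain ⟨J, -, hJ⟩ := exists_minimal_le_of_wellFoundedLT
    (fun J : Finset E => y ∈ G.comp J x) hJ₀.toFinset (by simpa using hxy₀)
  suffices hJY : ↑J ⊆ G.hull Y from comp_mono hJY hJ.prop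
  refine fun e he => ⟨x, hx, y, hy, fun hxy => ?_⟩
  have hJe : y ∈ G.comp (insert e ↑(J.erase e)) x := by
    rw [← Finset.coe_insert, Finset.insert_erase he]
    exact hJ.prop
  have hmin : y ∉ G.comp ↑(J.erase e) x := hJ.not_prop_of_lt (Finset.erase_ssubset he)
  obtain ⟨p, q, hpq, hp, hq⟩ := (mem_comp_insert hJe).resolve_left hmin
  have hsub : ↑(J.erase e) ⊆ ({e}ᶜ : Set E) := fun f hf => (Finset.mem_erase.1 hf).1
  refine hG.notMem_comp hpq (L := {e}ᶜ) (by simp) ?_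
  rw [mem_comp_iff_eq] at hxy ⊢
  rw [comp_eq_of_mem (comp_mono hsub hp), comp_eq_of_mem (comp_mono hsub hq), hxy]

theorem IsTree.src_mem_comp_hull (hG : G.IsTree) (he : e ∈ G.hull Y) (hv : v ∈ Y) :
    G.src e ∈ G.comp (G.hull Y) v := by
  obtain ⟨x, hx, y, hy, hxy⟩ := id he
  have hins : y ∈ G.comp (insert e (G.hull Y \ {e})) x :=
    comp_mono (by simp [Set.subset_insert]) (hG.mem_comp_hull hx hy)
  have hnot : y ∉ G.comp (G.hull Y \ {e}) x := fun h => hxy (comp_mono (fun f hf => hf.2) h)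
  obtain ⟨p, q, hpq, hp, -⟩ := (mem_comp_insert hins).resolve_left hnot
  have hpv : p ∈ G.comp (G.hull Y) v := by
    rw [← comp_eq_of_mem (hG.mem_comp_hull hv hx)]
    exact comp_mono Set.sdiff_subset hp
  rcases hpq with ⟨rfl, rfl⟩ | ⟨rfl, rfl⟩
  · exact hpv
  · exact (ends_src_tgt.mem_comp_iff he).2 hpv

end Trees

section Actions

open scoped Pointwise

variable {Γ : Type*} [Group Γ] [MulAction Γ V] [MulAction Γ E]

/-- The actions of `Γ` on the vertices and on the edges form an action on the graph `G`. -/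
class IsInvariant (Γ : Type*) [Group Γ] [MulAction Γ V] [MulAction Γ E] (G : OrientedGraph V E) :
    Prop where
  src_smul : ∀ (g : Γ) e, G.src (g • e) = g • G.src e
  tgt_smul : ∀ (g : Γ) e, G.tgt (g • e) = g • G.tgt e

/-- `E₀` is the edge set of a `Γ`-invariant subtree which contains the vertex `v₀`; its vertex set
is `comp E₀ v₀`. -/
structure IsInvariantSubtree (Γ : Type*) [Group Γ] [MulAction Γ V] [MulAction Γ E]
    (G : OrientedGraph V E) (E₀ : Set E) (v₀ : V) : Prop where
  smul_eq : ∀ g : Γ, g • E₀ = E₀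
  smul_mem_comp : ∀ g : Γ, g • v₀ ∈ G.comp E₀ v₀
  src_mem_comp : ∀ e ∈ E₀, G.src e ∈ G.comp E₀ v₀

variable {E₀ : Set E} {v₀ : V}

theorem IsInvariantSubtree.mem_comp_of_ends (h : IsInvariantSubtree Γ G E₀ v₀) (he : e ∈ E₀)
    (hpq : G.Ends e p q) : p ∈ G.comp E₀ v₀ := by
  rcases hpq with ⟨rfl, rfl⟩ | ⟨rfl, rfl⟩
  · exact h.src_mem_comp e he
  · exact (ends_src_tgt.mem_comp_iff he).1 (h.src_mem_comp e he)

theorem IsInvariantSubtree.tgt_mem_comp (h : IsInvariantSubtree Γ G E₀ v₀) (he : e ∈ E₀) :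
    G.tgt e ∈ G.comp E₀ v₀ :=
  h.mem_comp_of_ends he ends_src_tgt.symm

variable [IsInvariant Γ G]

theorem Ends.smul (g : Γ) (h : G.Ends e p q) : G.Ends (g • e) (g • p) (g • q) := by
  rcases h with ⟨rfl, rfl⟩ | ⟨rfl, rfl⟩
  · exact Or.inl ⟨IsInvariant.src_smul g e, IsInvariant.tgt_smul g e⟩
  · exact Or.inr ⟨IsInvariant.src_smul g e, IsInvariant.tgt_smul g e⟩

theorem smul_comp_subset (g : Γ) : g • G.comp L v ⊆ G.comp (g • L) (g • v) := by
  rw [Set.smul_set_subset_iff_subset_inv_smul_set]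
  refine comp_subset (fun e he => ?_) ?_
  · simp only [Set.mem_inv_smul_set_iff]
    exact (ends_src_tgt.smul g).mem_comp_iff (Set.smul_mem_smul_set he)
  · rw [Set.mem_inv_smul_set_iff]
    exact mem_comp_self

theorem comp_smul (g : Γ) : G.comp (g • L) (g • v) = g • G.comp L v := by
  refine (smul_comp_subset g).antisymm' ?_
  rw [Set.subset_smul_set_iff]
  simpa using smul_comp_subset (G := G) (L := g • L) (v := g • v) g⁻¹

theorem hull_smul (g : Γ) (Y : Set V) : G.hull (g • Y) = g • G.hull Y := by
  ext e
  have hcompl : ({e}ᶜ : Set E) = g • {g⁻¹ • e}ᶜ := by simp [Set.smul_set_compl]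
  simp only [hull, Set.mem_smul_set_iff_inv_smul_mem, Set.mem_ofPred_eq]
  rw [hcompl]
  refine ⟨fun ⟨x, hx, y, hy, hxy⟩ => ⟨g⁻¹ • x, hx, g⁻¹ • y, hy, fun h => hxy ?_⟩,
    fun ⟨x, hx, y, hy, hxy⟩ => ⟨g • x, by simpa, g • y, by simpa, ?_⟩⟩
  · rw [← smul_inv_smul g x, comp_smul]
    exact Set.mem_smul_set_iff_inv_smul_mem.2 h
  · rwa [comp_smul, Set.smul_mem_smul_set_iff]

theorem IsInvariantSubtree.smul_comp_eq (h : IsInvariantSubtree Γ G E₀ v₀) (g : Γ) :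
    g • G.comp E₀ v₀ = G.comp E₀ v₀ := by
  rw [← comp_smul, h.smul_eq, comp_eq_of_mem (h.smul_mem_comp g)]

theorem IsTree.isInvariantSubtree_hull (hG : G.IsTree) {Y : Set V} (hY : ∀ g : Γ, g • Y = Y)
    (hv₀ : v₀ ∈ Y) : IsInvariantSubtree Γ G (G.hull Y) v₀ where
  smul_eq g := by rw [← hull_smul, hY]
  smul_mem_comp g := hG.mem_comp_hull hv₀ (hY g ▸ Set.smul_mem_smul_set hv₀)
  src_mem_comp _ he := hG.src_mem_comp_hull he hv₀

/-- The elements which move `v` inside its component form a subgroup, so generators suffice. -/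
theorem smul_mem_comp_of_closure_eq_top (hL : ∀ g : Γ, g • L = L) {S : Set Γ}
    (hS : Subgroup.closure S = ⊤) (hSv : ∀ s ∈ S, s • v ∈ G.comp L v) (g : Γ) :
    g • v ∈ G.comp L v := by
  have hg : g ∈ Subgroup.closure S := hS ▸ Subgroup.mem_top g
  induction hg using Subgroup.closure_induction with
  | mem s hs => exact hSv s hs
  | one => simpa using mem_comp_self
  | mul g h _ _ ihg ihh =>
    have hgh : g • h • v ∈ G.comp L (g • v) := by
      rw [← hL g, comp_smul]
      exact Set.smul_mem_smul_set ihh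
    rwa [mul_smul, ← comp_eq_of_mem ihg]
  | inv g _ ihg =>
    rw [mem_comp_comm, ← hL g⁻¹, comp_smul, Set.mem_smul_set_iff_inv_smul_mem, inv_inv]
    exact ihg

theorem IsTree.finite_orbits_hull (hG : G.IsTree) [Group.FG Γ] {Y : Set V}
    (hY : (orbits Γ Y).Finite) : (orbits Γ (G.hull Y)).Finite := by
  obtain rfl | ⟨v, -⟩ := Y.eq_empty_or_nonempty
  · simp [hull, orbits]
  obtain ⟨S, hS⟩ := Group.fg_def.1 ‹Group.FG Γ›
  obtain ⟨T, -, hT, hTY⟩ := exists_finite_smul_eq hY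
  choose J _ hJ hvJ using fun w => exists_finite_mem_comp (hG.mem_comp_univ v w)
  let K : Set E := (⋃ s ∈ S, J (s • v)) ∪ ⋃ t ∈ T, J t
  have hK : K.Finite := (S.finite_toSet.biUnion fun _ _ => hJ _).union (hT.biUnion fun _ _ => hJ _)
  let L : Set E := ⋃ g : Γ, g • K
  have hKL : K ⊆ L := fun e he => Set.mem_iUnion.2 ⟨1, by simpa⟩
  have hL (g : Γ) : g • L = L := by
    simp only [L, Set.smul_set_iUnion, smul_smul]
    exact (Equiv.mulLeft g).surjective.iUnion_comp fun h => h • K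
  have hSv (s : Γ) (hs : s ∈ S) : s • v ∈ G.comp L v :=
    comp_mono ((Set.subset_biUnion_of_mem hs).trans (Set.subset_union_left.trans hKL)) (hvJ _)
  have hTv (t : V) (ht : t ∈ T) : t ∈ G.comp L v :=
    comp_mono ((Set.subset_biUnion_of_mem ht).trans (Set.subset_union_right.trans hKL)) (hvJ _)
  have hYv : Y ⊆ G.comp L v := fun y hy => by
    obtain ⟨g, t, ht, rfl⟩ := hTY y hy
    rw [← comp_eq_of_mem (smul_mem_comp_of_closure_eq_top hL hS hSv g), ← hL g, comp_smul]
    exact Set.smul_mem_smul_set (hTv t ht)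
  refine finite_orbits_of_subset_smul hK fun e he => ?_
  obtain ⟨g, f, hf, rfl⟩ := Set.mem_iUnion.1 (hull_subset_of_subset_comp hYv he)
  exact ⟨g, f, hf, rfl⟩

theorem finite_orbits_comp (hL : (orbits Γ L).Finite) : (orbits Γ (G.comp L v)).Finite := by
  obtain ⟨K, -, hK, hKL⟩ := exists_finite_smul_eq hL
  refine finite_orbits_of_subset_smul (((hK.image G.src).union (hK.image G.tgt)).insert v)
    (comp_subset (U := {x | ∃ g : Γ, ∃ y ∈ insert v (G.src '' K ∪ G.tgt '' K), g • y = x})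
      (fun e he => ?_) ⟨1, v, Or.inl rfl, one_smul _ _⟩)
  obtain ⟨g, f, hf, rfl⟩ := hKL e he
  exact iff_of_true
    ⟨g, G.src f, Or.inr (Or.inl ⟨f, hf, rfl⟩), (IsInvariant.src_smul g f).symm⟩
    ⟨g, G.tgt f, Or.inr (Or.inr ⟨f, hf, rfl⟩), (IsInvariant.tgt_smul g f).symm⟩

theorem finite_setOf_ends_mem [IsCancelSMul Γ V] (hL : (orbits Γ L).Finite) {U : Set V}
    (hU : U.Finite) : {e ∈ L | G.src e ∈ U ∨ G.tgt e ∈ U}.Finite := by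
  refine ((finite_setOf_mem_of_finite_orbits (IsInvariant.src_smul (G := G)) hL hU).union
    (finite_setOf_mem_of_finite_orbits (IsInvariant.tgt_smul (G := G)) hL hU)).subset ?_
  rintro e ⟨he, hsrc | htgt⟩
  · exact Or.inl ⟨he, hsrc⟩
  · exact Or.inr ⟨he, htgt⟩

end Actions

end OrientedGraph

/-! ### Order-preserving actions -/

/-- `Γ` acts on `X` by strictly increasing maps. -/
class StrictMonoSMul (Γ X : Type*) [SMul Γ X] [Preorder X] : Prop where
  strictMono_smul : ∀ g : Γ, StrictMono fun x : X => g • x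

section StrictMonoSMul

open scoped Pointwise

variable {Γ X : Type*} [Group Γ] [MulAction Γ X] [LinearOrder X]

instance (H : Subgroup Γ) [StrictMonoSMul Γ X] : StrictMonoSMul H X where
  strictMono_smul h := StrictMonoSMul.strictMono_smul (h : Γ)

variable [StrictMonoSMul Γ X]

theorem smul_lt_smul_iff_lt (g : Γ) {x y : X} : g • x < g • y ↔ x < y :=
  (StrictMonoSMul.strictMono_smul g).lt_iff_lt

theorem smul_Iio_eq (g : Γ) (x : X) : g • Set.Iio x = Set.Iio (g • x) := by
  ext y
  rw [Set.mem_smul_set_iff_inv_smul_mem, Set.mem_Iio, Set.mem_Iio, ← smul_lt_smul_iff_lt g,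
    smul_inv_smul]

theorem isGreatest_smul (g : Γ) {U : Set X} {x : X} (h : IsGreatest U x) :
    IsGreatest (g • U) (g • x) :=
  (StrictMonoSMul.strictMono_smul g).monotone.map_isGreatest h

theorem isLowerSet_smul (g : Γ) {M : Set X} (hM : IsLowerSet M) : IsLowerSet (g • M) :=
  fun x y hyx hx => by
    rw [Set.mem_smul_set_iff_inv_smul_mem] at hx ⊢
    exact hM ((StrictMonoSMul.strictMono_smul g⁻¹).monotone hyx) hx

end StrictMonoSMul

/-! ### Bridges -/

namespace OrientedGraph

open scoped Pointwise

variable {V E : Type*} {G : OrientedGraph V E} [LinearOrder E] {E₀ E₁ : Set E} {e e' : E}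
  {p q v w : V}

/-- The component of `v` in the subgraph of the edges of `E₀` which are smaller than `e`. -/
def compBelow (G : OrientedGraph V E) (E₀ : Set E) (e : E) (v : V) : Set V :=
  G.comp (E₀ ∩ Set.Iio e) v

/-- The edges of the subgraph `E₀` both of whose ends lie in infinite components of the subgraph
of the smaller edges: if the edges of `E₀` are added in increasing order, these are the edges which
merge two infinite components. -/
def bridges (G : OrientedGraph V E) (E₀ : Set E) : Set E :=
  {e ∈ E₀ | (G.compBelow E₀ e (G.src e)).Infinite ∧ (G.compBelow E₀ e (G.tgt e)).Infinite}

theorem bridges_subset : G.bridges E₀ ⊆ E₀ := fun _ he => he.1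

theorem bridges_mono (h : E₀ ⊆ E₁) : G.bridges E₀ ⊆ G.bridges E₁ := fun _ ⟨he, hsrc, htgt⟩ =>
  ⟨h he, hsrc.mono (comp_mono (Set.inter_subset_inter_left _ h)),
    htgt.mono (comp_mono (Set.inter_subset_inter_left _ h))⟩

section ElderRule

variable [LinearOrder V] {v' : V}

theorem exists_isGreatest_compBelow (hp : (G.compBelow E₀ e p).Finite) :
    ∃ v, IsGreatest (G.compBelow E₀ e p) v :=
  Set.exists_max_image _ id hp ⟨p, mem_comp_self⟩

/-- The elder rule of persistent homology: a component which is finite is named after its greatest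
vertex, and this name dies when the component is merged with one that is infinite or has a greater
name. `G.Kills E₀ e v` says that the edge `e` of `E₀` puts an end to the name `v`. -/
def Kills (G : OrientedGraph V E) (E₀ : Set E) (e : E) (v : V) : Prop :=
  e ∈ E₀ ∧ ∃ p q, G.Ends e p q ∧ (G.compBelow E₀ e p).Finite ∧
    IsGreatest (G.compBelow E₀ e p) v ∧
      ((G.compBelow E₀ e q).Infinite ∨ ∃ w ∈ G.compBelow E₀ e q, v < w)

theorem exists_kills_of_finite (he : e ∈ E₀) (hpq : G.Ends e p q)
    (hq : q ∉ G.compBelow E₀ e p) (hp : (G.compBelow E₀ e p).Finite) : ∃ v, G.Kills E₀ e v := by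
  obtain ⟨v, hv⟩ := exists_isGreatest_compBelow hp
  by_cases hqfin : (G.compBelow E₀ e q).Finite
  swap
  · exact ⟨v, he, p, q, hpq, hp, hv, Or.inl hqfin⟩
  obtain ⟨w, hw⟩ := exists_isGreatest_compBelow hqfin
  rcases lt_trichotomy v w with hvw | rfl | hwv
  · exact ⟨v, he, p, q, hpq, hp, hv, Or.inr ⟨w, hw.1, hvw⟩⟩
  · exact absurd (mem_comp_iff_eq.2 ((comp_eq_of_mem hw.1).symm.trans (comp_eq_of_mem hv.1))) hq
  · exact ⟨w, he, q, p, hpq.symm, hqfin, hw, Or.inr ⟨v, hv.1, hwv⟩⟩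

theorem IsTree.exists_kills (hG : G.IsTree) (he : e ∈ E₀) (hb : e ∉ G.bridges E₀) :
    ∃ v, G.Kills E₀ e v := by
  have hacyclic {p q : V} (hpq : G.Ends e p q) : q ∉ G.compBelow E₀ e p :=
    hG.notMem_comp hpq fun h => lt_irrefl e h.2
  by_cases hsrc : (G.compBelow E₀ e (G.src e)).Finite
  · exact exists_kills_of_finite he ends_src_tgt (hacyclic ends_src_tgt) hsrc
  · have htgt : (G.compBelow E₀ e (G.tgt e)).Finite := by
      by_contra htgt
      exact hb ⟨he, hsrc, htgt⟩
    exact exists_kills_of_finite he ends_src_tgt.symm (hacyclic ends_src_tgt.symm) htgt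

theorem Kills.notMem_bridges (h : G.Kills E₀ e v) : e ∉ G.bridges E₀ := by
  rintro ⟨-, hsrc, htgt⟩
  obtain ⟨-, p, q, ⟨rfl, rfl⟩ | ⟨rfl, rfl⟩, hp, -⟩ := h
  · exact hsrc hp
  · exact htgt hp

theorem Kills.not_lt (h : G.Kills E₀ e v) (h' : G.Kills E₀ e' v) : ¬ e < e' := by
  intro hlt
  obtain ⟨he, p, q, hpq, -, hv, hq⟩ := h
  obtain ⟨-, p', q', -, hp', hv', -⟩ := h'
  have hsub : E₀ ∩ Set.Iio e ⊆ E₀ ∩ Set.Iio e' :=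
    Set.inter_subset_inter_right _ (Set.Iio_subset_Iio hlt.le)
  have hpc : p ∈ G.compBelow E₀ e' p' := by
    rw [compBelow, ← comp_eq_of_mem hv'.1]
    exact comp_mono hsub (mem_comp_comm.1 hv.1)
  have hqc : q ∈ G.compBelow E₀ e' p' := (hpq.mem_comp_iff (L := E₀ ∩ Set.Iio e') ⟨he, hlt⟩).1 hpc
  have hqsub : G.compBelow E₀ e q ⊆ G.compBelow E₀ e' p' := by
    rw [compBelow, compBelow, ← comp_eq_of_mem hqc]
    exact comp_mono hsub
  rcases hq with hq | ⟨w, hw, hvw⟩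
  · exact hq (hp'.subset hqsub)
  · exact hvw.not_ge (hv'.2 (hqsub hw))

theorem Kills.edge_unique (h : G.Kills E₀ e v) (h' : G.Kills E₀ e' v) : e = e' :=
  le_antisymm (le_of_not_gt (h'.not_lt h)) (le_of_not_gt (h.not_lt h'))

theorem Kills.vertex_unique (h : G.Kills E₀ e v) (h' : G.Kills E₀ e v') : v = v' := by
  obtain ⟨-, p, q, hpq, hp, hv, hq⟩ := h
  obtain ⟨-, p', q', hpq', hp', hv', hq'⟩ := h'
  have hcase : (p = p' ∧ q = q') ∨ (p = q' ∧ q = p') := by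
    obtain ⟨rfl, rfl⟩ | ⟨rfl, rfl⟩ := hpq <;> obtain ⟨rfl, rfl⟩ | ⟨rfl, rfl⟩ := hpq' <;> simp
  obtain ⟨rfl, rfl⟩ | ⟨rfl, rfl⟩ := hcase
  · exact hv.unique hv'
  · obtain ⟨w, hw, hvw⟩ := hq.resolve_left fun hq => hq hp'
    obtain ⟨w', hw', hvw'⟩ := hq'.resolve_left fun hq' => hq' hp
    exact absurd ((hvw.trans_le (hv'.2 hw)).trans (hvw'.trans_le (hv.2 hw'))) (lt_irrefl v)

end ElderRule

section Actions

variable {Γ : Type*} [Group Γ] [MulAction Γ V] [MulAction Γ E] [IsInvariant Γ G]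
  [StrictMonoSMul Γ E]

theorem compBelow_smul (g : Γ) : G.compBelow (g • E₀) (g • e) (g • v) = g • G.compBelow E₀ e v := by
  rw [compBelow, compBelow, ← comp_smul, Set.smul_set_inter, smul_Iio_eq]

theorem bridges_smul (g : Γ) (E₀ : Set E) : G.bridges (g • E₀) = g • G.bridges E₀ := by
  ext e
  obtain ⟨e, rfl⟩ := MulAction.surjective g e
  simp only [bridges, Set.mem_ofPred_eq, Set.smul_mem_smul_set_iff, IsInvariant.src_smul,
    IsInvariant.tgt_smul, compBelow_smul, Set.infinite_smul_set]

variable [LinearOrder V] [StrictMonoSMul Γ V]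

theorem Kills.smul (g : Γ) (h : G.Kills E₀ e v) : G.Kills (g • E₀) (g • e) (g • v) := by
  obtain ⟨he, p, q, hpq, hp, hv, hq⟩ := h
  refine ⟨Set.smul_mem_smul_set he, g • p, g • q, hpq.smul g, ?_⟩
  simp only [compBelow_smul, Set.finite_smul_set, Set.infinite_smul_set]
  refine ⟨hp, isGreatest_smul g hv, hq.imp_right ?_⟩
  exact fun ⟨w, hw, hvw⟩ => ⟨g • w, Set.smul_mem_smul_set hw, (smul_lt_smul_iff_lt g).2 hvw⟩

/-- If `v` is the name of its finite component in the subgraph of the edges of a lower set `M`, then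
no nontrivial translate of `M` can be compared with `M`. -/
theorem eq_one_of_smul_mem_comp [IsCancelSMul Γ V] (hE₀ : ∀ g : Γ, g • E₀ = E₀) {M : Set E}
    (hM : IsLowerSet M) (hfin : (G.comp (E₀ ∩ M) v).Finite)
    (hv : IsGreatest (G.comp (E₀ ∩ M) v) v) {g : Γ} (hw : w ∈ G.comp (E₀ ∩ M) v)
    (hgw : g • w ∈ G.comp (E₀ ∩ M) v) : g = 1 := by
  set U := G.comp (E₀ ∩ M) v with hU
  have hUw : U = G.comp (E₀ ∩ M) (g • w) := (comp_eq_of_mem hgw).symm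
  have hgU : g • U = G.comp (E₀ ∩ g • M) (g • w) := by
    rw [hU, ← comp_eq_of_mem hw, ← comp_smul, Set.smul_set_inter, hE₀]
  have hcard : (g • U).ncard = U.ncard := Set.ncard_smul_set g U
  have hgUU : g • U = U := by
    rcases (isLowerSet_smul g hM).total hM with hgM | hgM
    · refine Set.eq_of_subset_of_ncard_le ?_ hcard.ge hfin
      rw [hgU, hUw]
      exact comp_mono (Set.inter_subset_inter_right _ hgM)
    · refine (Set.eq_of_subset_of_ncard_le ?_ hcard.le (hfin.image _)).symm
      rw [hgU, hUw]
      exact comp_mono (Set.inter_subset_inter_right _ hgM)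
  exact IsCancelSMul.eq_one_of_smul ((hgUU ▸ isGreatest_smul g hv).unique hv)

end Actions

end OrientedGraph

namespace OrientedGraph

open scoped Pointwise

variable {V E : Type*} {G : OrientedGraph V E} [LinearOrder E] {E₀ M : Set E} {e : E}
  {v w v₀ : V}

section Lifespan

variable [LinearOrder V]

/-- The lower set `M` of edges is a stage, in the process of adding the edges of `E₀` in increasing
order, at which `v` is the name of its component. -/
def Names (G : OrientedGraph V E) (E₀ M : Set E) (v : V) : Prop :=
  IsLowerSet M ∧ (G.comp (E₀ ∩ M) v).Finite ∧ IsGreatest (G.comp (E₀ ∩ M) v) v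

/-- The union of all the stages at which `v` is the name of its component. -/
def lifespan (G : OrientedGraph V E) (E₀ : Set E) (v : V) : Set E := ⋃ M ∈ {M | G.Names E₀ M v}, M

theorem names_empty : G.Names E₀ ∅ v := by
  have hcomp : G.comp (E₀ ∩ ∅) v = {v} :=
    (comp_subset (U := {v}) (by simp) rfl).antisymm (Set.singleton_subset_iff.2 mem_comp_self)
  rw [Names, hcomp]
  exact ⟨isLowerSet_empty, Set.finite_singleton v, isGreatest_singleton⟩

theorem exists_names_of_mem_comp_lifespan (hw : w ∈ G.comp (E₀ ∩ G.lifespan E₀ v) v) :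
    ∃ M, G.Names E₀ M v ∧ w ∈ G.comp (E₀ ∩ M) v := by
  obtain ⟨J, hJ, hJfin, hwJ⟩ := exists_finite_mem_comp hw
  lift J to Finset E using hJfin
  obtain ⟨M, hM, hJM⟩ := DirectedOn.exists_mem_subset_of_finset_subset_biUnion (f := id)
    (c := {M | G.Names E₀ M v}) ⟨∅, names_empty⟩
    (IsChain.directedOn fun M hM N hN _ => hM.1.total hN.1)
    (hJ.trans Set.inter_subset_right)
  exact ⟨M, hM, comp_mono (L' := E₀ ∩ M) (fun e he => ⟨(hJ he).1, hJM he⟩) hwJ⟩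

variable {Γ : Type*} [Group Γ] [MulAction Γ V] [MulAction Γ E] [IsInvariant Γ G]
  [StrictMonoSMul Γ V] [StrictMonoSMul Γ E] [IsCancelSMul Γ V]

/-- The components named `v` embed into the set of orbits, hence their union is finite. -/
theorem names_lifespan (hE₀ : ∀ g : Γ, g • E₀ = E₀) (hV : (orbits Γ (G.comp E₀ v)).Finite) :
    G.Names E₀ (G.lifespan E₀ v) v := by
  refine ⟨isLowerSet_iUnion₂ fun M hM => hM.1, ?_, mem_comp_self, fun w hw => ?_⟩
  · refine Set.Finite.of_finite_image (f := orbitClass Γ)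
      (hV.subset (Set.image_mono (comp_mono Set.inter_subset_left))) fun w hw w' hw' hww' => ?_
    obtain ⟨g, rfl⟩ := orbitClass_eq_iff.1 hww'
    obtain ⟨M, hM, hwM⟩ := exists_names_of_mem_comp_lifespan hw
    obtain ⟨M', hM', hwM'⟩ := exists_names_of_mem_comp_lifespan hw'
    have hg : g = 1 := by
      rcases hM.1.total hM'.1 with h | h
      · exact eq_one_of_smul_mem_comp hE₀ hM'.1 hM'.2.1 hM'.2.2
          (comp_mono (Set.inter_subset_inter_right _ h) hwM) hwM'
      · exact eq_one_of_smul_mem_comp hE₀ hM.1 hM.2.1 hM.2.2 hwM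
          (comp_mono (Set.inter_subset_inter_right _ h) hwM')
    rw [hg, one_smul]
  · obtain ⟨M, hM, hwM⟩ := exists_names_of_mem_comp_lifespan hw
    exact hM.2.2.2 hwM

end Lifespan

section Actions

variable {Γ : Type*} [Group Γ] [MulAction Γ V] [MulAction Γ E] [IsInvariant Γ G]
  [IsCancelSMul Γ V]

/-- The edge is the smallest one of `E₀ \ M` with an end in `G.comp (E₀ ∩ M) v`. -/
theorem exists_compBelow_eq (hE : (orbits Γ E₀).Finite) (hM : IsLowerSet M)
    (hfin : (G.comp (E₀ ∩ M) v).Finite) (hinf : (G.comp E₀ v).Infinite) :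
    ∃ e ∈ E₀ \ M, ∃ p q, G.Ends e p q ∧ p ∈ G.comp (E₀ ∩ M) v ∧
      G.compBelow E₀ e v = G.comp (E₀ ∩ M) v := by
  set U := G.comp (E₀ ∩ M) v
  set B := {e ∈ E₀ | G.src e ∈ U ∨ G.tgt e ∈ U} \ M
  have hBfin : B.Finite := (finite_setOf_ends_mem hE hfin).sdiff
  have hclosed {L : Set E} (hL : L ⊆ E₀) (hLB : Disjoint L B) : G.comp L v ⊆ U := by
    refine comp_subset (fun f hf => ?_) mem_comp_self
    by_cases hfM : f ∈ M
    · exact ends_src_tgt.mem_comp_iff ⟨hL hf, hfM⟩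
    · have hfB : ¬ (G.src f ∈ U ∨ G.tgt f ∈ U) := fun h =>
        Set.disjoint_left.1 hLB hf ⟨⟨hL hf, h⟩, hfM⟩
      tauto
  have hBne : B.Nonempty := by
    by_contra! hBempty
    exact hinf (hfin.subset (hclosed subset_rfl (hBempty ▸ Set.disjoint_empty _)))
  obtain ⟨e, ⟨⟨heE, he⟩, heM⟩, hemin⟩ := hBfin.exists_minimal hBne
  have hbelow : G.compBelow E₀ e v = U := by
    refine (hclosed Set.inter_subset_left ?_).antisymm
      (comp_mono (Set.inter_subset_inter_right _ fun f hf => ?_))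
    · exact Set.disjoint_left.2 fun f hf hfB => hf.2.not_ge (hemin hfB hf.2.le)
    · exact lt_of_not_ge fun hef => heM (hM hef hf)
  rcases he with he | he
  · exact ⟨e, ⟨heE, heM⟩, _, _, ends_src_tgt, he, hbelow⟩
  · exact ⟨e, ⟨heE, heM⟩, _, _, ends_src_tgt.symm, he, hbelow⟩

variable [LinearOrder V] [StrictMonoSMul Γ V] [StrictMonoSMul Γ E]

/-- An edge which ends the lifespan of `v` is the smallest one which leaves the last component
named `v`. -/
theorem exists_kills_vertex (hE₀ : ∀ g : Γ, g • E₀ = E₀) (hE : (orbits Γ E₀).Finite)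
    (hinf : (G.comp E₀ v).Infinite) :
    ∃ e, G.Kills E₀ e v := by
  obtain ⟨hM, hfin, hv⟩ := names_lifespan (G := G) (v := v) hE₀ (finite_orbits_comp hE)
  obtain ⟨e, ⟨heE, heM⟩, p, q, hpq, hp, hbelow⟩ := exists_compBelow_eq hE hM hfin hinf
  rw [← hbelow] at hfin hv hp
  have hpv : G.compBelow E₀ e p = G.compBelow E₀ e v := comp_eq_of_mem hp
  refine ⟨e, heE, p, q, hpq, hpv ▸ hfin, hpv ▸ hv, ?_⟩
  by_contra! hq
  have hIic : E₀ ∩ Set.Iic e = insert e (E₀ ∩ Set.Iio e) := by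
    rw [← Set.Iio_insert, Set.inter_insert_of_mem heE]
  have hsub : G.comp (E₀ ∩ Set.Iic e) v ⊆ G.compBelow E₀ e v ∪ G.compBelow E₀ e q :=
    hIic ▸ comp_insert_subset hpq hp
  have hname : G.Names E₀ (Set.Iic e) v :=
    ⟨isLowerSet_Iic e, (hfin.union hq.1).subset hsub, mem_comp_self,
      fun w hw => (hsub hw).elim (fun hw => hv.2 hw) (hq.2 w)⟩
  exact heM (Set.mem_biUnion (t := id) hname Set.self_mem_Iic)

end Actions

section Trees

variable {Γ : Type*} [Group Γ] [MulAction Γ V] [MulAction Γ E] [IsInvariant Γ G]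
  [IsCancelSMul Γ V] [LinearOrder V] [StrictMonoSMul Γ V] [StrictMonoSMul Γ E]

theorem IsTree.encard_orbits_diff_bridges (hG : G.IsTree) (h : IsInvariantSubtree Γ G E₀ v₀)
    (hE : (orbits Γ E₀).Finite) (hinf : (G.comp E₀ v₀).Infinite) :
    (orbits Γ (E₀ \ G.bridges E₀)).encard = (orbits Γ (G.comp E₀ v₀)).encard := by
  have hsmul (g : Γ) (e : E) (v : V) (hev : G.Kills E₀ e v) : G.Kills E₀ (g • e) (g • v) := by
    simpa only [h.smul_eq] using hev.smul g
  apply le_antisymm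
  · refine encard_orbits_le_of_rel (G.Kills E₀) hsmul (fun _ _ _ => Kills.edge_unique) ?_
    rintro e ⟨he, hb⟩
    obtain ⟨v, hev⟩ := hG.exists_kills he hb
    obtain ⟨-, p, q, hpq, -, hv, -⟩ := id hev
    refine ⟨v, ?_, hev⟩
    rw [← comp_eq_of_mem (h.mem_comp_of_ends he hpq)]
    exact comp_mono Set.inter_subset_left hv.1
  · refine encard_orbits_le_of_rel (fun v e => G.Kills E₀ e v) (fun g v e => hsmul g e v)
      (fun _ _ _ => Kills.vertex_unique) fun v hv => ?_
    have hcomp : G.comp E₀ v = G.comp E₀ v₀ := comp_eq_of_mem hv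
    obtain ⟨e, hev⟩ := exists_kills_vertex h.smul_eq hE (hcomp ▸ hinf)
    exact ⟨e, ⟨hev.1, hev.notMem_bridges⟩, hev⟩

end Trees

end OrientedGraph

/-! ### The rank of a free group -/

section Rank

variable {Γ ι : Type*} [Group Γ]

theorem closure_range_basis (b : FreeGroupBasis ι Γ) : Subgroup.closure (Set.range b) = ⊤ := by
  have h : Set.range b = b.repr.symm.toMonoidHom '' Set.range FreeGroup.of := by
    rw [← Set.range_comp]
    rfl
  rw [h, ← MonoidHom.map_closure, FreeGroup.closure_range_of, ← MonoidHom.range_eq_map]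
  exact MonoidHom.range_eq_top.2 b.repr.symm.surjective

/-- The evaluation of the homomorphisms `Γ → ℚ` at the members of a family. -/
def evalFamily (b : ι → Γ) : (Additive Γ →+ ℚ) →ₗ[ℚ] (ι → ℚ) where
  toFun χ i := χ (Additive.ofMul (b i))
  map_add' _ _ := rfl
  map_smul' _ _ := rfl

theorem evalFamily_injective {b : ι → Γ} (hb : Subgroup.closure (Set.range b) = ⊤) :
    Function.Injective (evalFamily b) := by
  intro χ ψ h
  have heq : AddMonoidHom.toMultiplicativeRight χ = AddMonoidHom.toMultiplicativeRight ψ :=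
    MonoidHom.eq_of_eqOn_dense hb (by rintro _ ⟨i, rfl⟩; exact congrFun h i)
  exact AddMonoidHom.toMultiplicativeRight.injective heq

theorem evalFamily_surjective (b : FreeGroupBasis ι Γ) : Function.Surjective (evalFamily b) := by
  intro φ
  refine ⟨MonoidHom.toAdditiveLeft (b.lift fun i => Multiplicative.ofAdd (φ i)), ?_⟩
  ext i
  simp [evalFamily]

instance [Group.FG Γ] : FiniteDimensional ℚ (Additive Γ →+ ℚ) := by
  obtain ⟨S, -, hS⟩ := Group.rank_spec Γ
  exact Module.Finite.of_injective _ (evalFamily_injective (b := ((↑) : S → Γ)) (by simpa using hS))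

theorem finite_of_basis [Group.FG Γ] (b : FreeGroupBasis ι Γ) : Finite ι := by
  have := Module.Finite.of_surjective _ (evalFamily_surjective b)
  classical
  exact (Pi.linearIndependent_single_one ι ℚ).finite

theorem finrank_addMonoidHom_eq_rank [IsFreeGroup Γ] [Group.FG Γ] :
    Module.finrank ℚ (Additive Γ →+ ℚ) = Group.rank Γ := by
  classical
  apply le_antisymm
  · obtain ⟨S, hcard, hS⟩ := Group.rank_spec Γ
    rw [← hcard]
    simpa using LinearMap.finrank_le_finrank_of_injective
      (evalFamily_injective (b := ((↑) : S → Γ)) (by simpa using hS))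
  · let b := IsFreeGroup.basis Γ
    have := finite_of_basis b
    have := Fintype.ofFinite (IsFreeGroup.Generators Γ)
    calc Group.rank Γ ≤ (Finset.univ.image b).card :=
          Group.rank_le (by simpa using closure_range_basis b)
      _ ≤ Fintype.card (IsFreeGroup.Generators Γ) := Finset.card_image_le
      _ ≤ Module.finrank ℚ (Additive Γ →+ ℚ) := by
          simpa using LinearMap.finrank_le_finrank_of_surjective (evalFamily_surjective b)

end Rank

/-! ### The Euler characteristic of a free action on a tree -/

namespace OrientedGraph

open scoped Pointwise

variable {V E Γ : Type*} {G : OrientedGraph V E} [Group Γ] [MulAction Γ E]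
  {E₀ : Set E} {V₀ : Set V} {v v₀ : V}

section Potential

variable {X : Type*} [MulAction Γ X] {S : Set X} [MulAction Γ V]

/-- The `Γ`-invariant function on `X` with prescribed values on the orbits which meet `S`, and zero
on the others. -/
noncomputable def ofOrbits (S : Set X) :
    (orbits Γ S → ℚ) →ₗ[ℚ] (X → ℚ) :=
  LinearMap.funLeft ℚ ℚ (orbitClass Γ) ∘ₗ
    Function.ExtendByZero.linearMap ℚ ((↑) : orbits Γ S → MulAction.orbitRel.Quotient Γ X)

theorem ofOrbits_smul (a : orbits Γ S → ℚ) (g : Γ) (x : X) :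
    ofOrbits S a (g • x) = ofOrbits S a x :=
  congrArg (Function.extend _ a _) (orbitClass_smul g x)

theorem ofOrbits_apply (a : orbits Γ S → ℚ) {x : X}
    (hx : x ∈ S) : ofOrbits S a x = a ⟨orbitClass Γ x, orbitClass_mem_orbits_of_mem hx⟩ :=
  Subtype.val_injective.extend_apply a _ ⟨orbitClass Γ x, orbitClass_mem_orbits_of_mem hx⟩

/-- For an equivariant map `s : V → Γ`, the functions `Ψ` such that `Ψ (g • v) = χ g + Ψ v` for a
homomorphism `χ : Γ → ℚ` have the form `Ψ v = a v + χ (s v)`, where `a` is invariant. Here `a` is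
given on the orbits which meet `V₀`. -/
noncomputable def potential (s : V → Γ) (V₀ : Set V) :
    ((orbits Γ V₀ → ℚ) × (Additive Γ →+ ℚ)) →ₗ[ℚ] (V → ℚ) :=
  (ofOrbits V₀).coprod (evalFamily s)

variable {s : V → Γ}

theorem potential_apply (x : (orbits Γ V₀ → ℚ) × (Additive Γ →+ ℚ)) (v : V) :
    potential s V₀ x v = ofOrbits V₀ x.1 v + x.2 (.ofMul (s v)) :=
  rfl

theorem potential_smul (hs : ∀ (g : Γ) v, s (g • v) = g * s v)
    (x : (orbits Γ V₀ → ℚ) × (Additive Γ →+ ℚ)) (g : Γ) (v : V) :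
    potential s V₀ x (g • v) = x.2 (.ofMul g) + potential s V₀ x v := by
  rw [potential_apply, potential_apply, ofOrbits_smul, hs, ofMul_mul, map_add]
  ring

theorem exists_potential_eq (hs : ∀ (g : Γ) v, s (g • v) = g * s v) {Φ : V → ℚ}
    {χ : Additive Γ →+ ℚ} (hΦ : ∀ (g : Γ) v, Φ (g • v) = χ (.ofMul g) + Φ v) :
    ∃ a, ∀ v ∈ V₀, potential s V₀ (a, χ) v = Φ v := by
  refine ⟨fun o => Φ o.1.out - χ (.ofMul (s o.1.out)), fun v hv => ?_⟩
  obtain ⟨g, hg⟩ : ∃ g : Γ, g • v = (orbitClass Γ v).out :=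
    orbitClass_eq_iff.1 (Quotient.out_eq _).symm
  rw [potential_apply, ofOrbits_apply _ hv]
  simp only [← hg, hΦ, hs, ofMul_mul, map_add]
  ring

end Potential

variable (Γ G E₀) in
/-- The coboundary of a function on the vertices, evaluated at one edge in each orbit. -/
noncomputable def coboundary : (V → ℚ) →ₗ[ℚ] (orbits Γ E₀ → ℚ) :=
  LinearMap.funLeft ℚ ℚ (fun o => G.tgt o.1.out) - LinearMap.funLeft ℚ ℚ fun o => G.src o.1.out

theorem coboundary_apply (Ψ : V → ℚ) (o : orbits Γ E₀) :
    G.coboundary Γ E₀ Ψ o = Ψ (G.tgt o.1.out) - Ψ (G.src o.1.out) := rfl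

variable [MulAction Γ V]

theorem IsInvariantSubtree.out_mem (h : IsInvariantSubtree Γ G E₀ v₀) (o : orbits Γ E₀) :
    o.1.out ∈ E₀ := by
  have ho : orbitClass Γ o.1.out = o.1 := Quotient.out_eq _
  exact (orbitClass_mem_orbits h.smul_eq).1 (ho.symm ▸ o.2)

variable [IsInvariant Γ G]

theorem IsTree.exists_primitive_of_invariant (hG : G.IsTree) (v₀ : V) {φ : E → ℚ}
    (hφ : ∀ (g : Γ) e, φ (g • e) = φ e) :
    ∃ Φ : V → ℚ, ∃ χ : Additive Γ →+ ℚ, (∀ e, Φ (G.tgt e) = Φ (G.src e) + φ e) ∧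
      ∀ (g : Γ) v, Φ (g • v) = χ (.ofMul g) + Φ v := by
  obtain ⟨Φ, hΦ⟩ := hG.exists_primitive φ
  have hconst (g : Γ) (v : V) : Φ (g • v) - Φ v = Φ (g • v₀) - Φ v₀ := by
    refine comp_subset (U := {v | Φ (g • v) - Φ v = Φ (g • v₀) - Φ v₀}) (fun e _ => ?_) rfl
      (hG.mem_comp_univ v₀ v)
    have htgt := hΦ (g • e)
    rw [IsInvariant.src_smul, IsInvariant.tgt_smul, hφ] at htgt
    rw [Set.mem_ofPred_eq, Set.mem_ofPred_eq, htgt, hΦ e, add_sub_add_right_eq_sub]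
  refine ⟨Φ, AddMonoidHom.mk' (fun g => Φ (g.toMul • v₀) - Φ v₀) fun g h => ?_, hΦ, fun g v => ?_⟩
  · rw [toMul_add, mul_smul, ← hconst g.toMul (h.toMul • v₀)]
    ring
  · simp [← hconst g v]

variable {s : V → Γ}

theorem coboundary_comp_potential_surjective (hG : G.IsTree)
    (hs : ∀ (g : Γ) v, s (g • v) = g * s v) (h : IsInvariantSubtree Γ G E₀ v₀) :
    Function.Surjective (G.coboundary Γ E₀ ∘ₗ potential s (G.comp E₀ v₀)) := by
  intro c
  obtain ⟨Φ, χ, hΦ, hχ⟩ := hG.exists_primitive_of_invariant (Γ := Γ) v₀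
    (φ := ofOrbits E₀ c) (ofOrbits_smul c)
  obtain ⟨a, ha⟩ := exists_potential_eq (V₀ := G.comp E₀ v₀) hs hχ
  refine ⟨(a, χ), funext fun o => ?_⟩
  have hmem := h.out_mem o
  rw [LinearMap.comp_apply, coboundary_apply, ha _ (h.tgt_mem_comp hmem),
    ha _ (h.src_mem_comp _ hmem), hΦ, ofOrbits_apply c hmem, add_sub_cancel_left]
  exact congrArg c (Subtype.ext (Quotient.out_eq _))

theorem eq_on_comp_of_coboundary_eq_zero {Ψ : V → ℚ}
    {χ : Additive Γ →+ ℚ} (hΨ : ∀ (g : Γ) v, Ψ (g • v) = χ (.ofMul g) + Ψ v)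
    (hker : G.coboundary Γ E₀ Ψ = 0) (hv : v ∈ G.comp E₀ v₀) : Ψ v = Ψ v₀ := by
  refine comp_subset (U := {v | Ψ v = Ψ v₀}) (fun e he => ?_) rfl hv
  obtain ⟨g, hg⟩ : ∃ g : Γ, g • (orbitClass Γ e).out = e :=
    orbitClass_eq_iff.1 (Quotient.out_eq _)
  have hzero : Ψ (G.tgt (orbitClass Γ e).out) - Ψ (G.src (orbitClass Γ e).out) = 0 :=
    congrFun hker ⟨orbitClass Γ e, orbitClass_mem_orbits_of_mem he⟩
  rw [Set.mem_ofPred_eq, Set.mem_ofPred_eq, ← hg, IsInvariant.src_smul, IsInvariant.tgt_smul, hΨ,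
    hΨ, sub_eq_zero.1 hzero]

theorem finrank_ker_coboundary_comp_potential (hs : ∀ (g : Γ) v, s (g • v) = g * s v)
    (h : IsInvariantSubtree Γ G E₀ v₀) :
    Module.finrank ℚ
      (LinearMap.ker (G.coboundary Γ E₀ ∘ₗ potential s (G.comp E₀ v₀))) = 1 := by
  set P := potential s (G.comp E₀ v₀) with hP
  have hone {v : V} (hv : v ∈ G.comp E₀ v₀) : P (fun _ => 1, 0) v = 1 := by
    rw [potential_apply, ofOrbits_apply _ hv]
    simp
  have hker : (fun _ => 1, 0) ∈ LinearMap.ker (G.coboundary Γ E₀ ∘ₗ P) := by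
    refine LinearMap.mem_ker.2 (funext fun o => ?_)
    rw [LinearMap.comp_apply, coboundary_apply, hone (h.tgt_mem_comp (h.out_mem o)),
      hone (h.src_mem_comp _ (h.out_mem o)), sub_self, Pi.zero_apply]
  refine (finrank_eq_one_iff_of_nonzero' ⟨_, hker⟩ fun hzero => ?_).2 ?_
  · have hv₀ := congrFun (congrArg P (congrArg Subtype.val hzero)) v₀
    simp [hone mem_comp_self] at hv₀
  rintro ⟨x, hx⟩
  have hconst {v : V} (hv : v ∈ G.comp E₀ v₀) : P x v = P x v₀ :=
    eq_on_comp_of_coboundary_eq_zero (potential_smul hs x) hx hv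
  have hχ : x.2 = 0 := by
    ext g
    have hg := potential_smul (V₀ := G.comp E₀ v₀) hs x g v₀
    rw [← hP, hconst (h.smul_mem_comp g)] at hg
    simpa using hg
  refine ⟨P x v₀, Subtype.ext (Prod.ext (funext ?_) (by simp [hχ]))⟩
  rintro ⟨_, v, hv, rfl⟩
  have ha := hconst hv
  rw [potential_apply _ v, hχ, ofOrbits_apply _ hv] at ha
  simpa using ha.symm

theorem IsTree.encard_orbits_add_one (hG : G.IsTree) [IsCancelSMul Γ V] [IsFreeGroup Γ]
    [Group.FG Γ] (h : IsInvariantSubtree Γ G E₀ v₀) (hE : (orbits Γ E₀).Finite) :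
    (orbits Γ E₀).encard + 1 = (orbits Γ (G.comp E₀ v₀)).encard + Group.rank Γ := by
  obtain ⟨s, hs⟩ := exists_equivariant_map (Γ := Γ) (X := V)
  have hV := finite_orbits_comp (G := G) (v := v₀) hE
  have := hE.fintype
  have := hV.fintype
  have hrank := LinearMap.finrank_range_add_finrank_ker
    (G.coboundary Γ E₀ ∘ₗ potential s (G.comp E₀ v₀))
  rw [LinearMap.range_eq_top.2 (coboundary_comp_potential_surjective hG hs h), finrank_top,
    finrank_ker_coboundary_comp_potential hs h, Module.finrank_prod,
    Module.finrank_fintype_fun_eq_card, Module.finrank_fintype_fun_eq_card,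
    finrank_addMonoidHom_eq_rank] at hrank
  rw [Set.encard_eq_coe_toFinset_card, Set.encard_eq_coe_toFinset_card, Set.toFinset_card,
    Set.toFinset_card]
  exact_mod_cast hrank

end OrientedGraph

/-! ### Counting bridges -/

namespace OrientedGraph

open scoped Pointwise

section Hull

variable {V E Γ : Type*} {G : OrientedGraph V E} [Group Γ] [MulAction Γ V] [MulAction Γ E]
  [IsInvariant Γ G] [IsCancelSMul Γ V] [LinearOrder V] [StrictMonoSMul Γ V]
  {E₀ : Set E} {Y Y' : Set V} {v₀ : V}

theorem IsInvariantSubtree.subsingleton_of_finite (h : IsInvariantSubtree Γ G E₀ v₀)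
    (hfin : (G.comp E₀ v₀).Finite) : Subsingleton Γ := by
  obtain ⟨v, hv⟩ : ∃ v, IsGreatest (G.comp E₀ v₀) v :=
    Set.exists_max_image _ id hfin ⟨v₀, mem_comp_self⟩
  refine subsingleton_of_forall_eq 1 fun g => IsCancelSMul.eq_one_of_smul (x := v) ?_
  exact (h.smul_comp_eq g ▸ isGreatest_smul g hv).unique hv

variable [LinearOrder E] [StrictMonoSMul Γ E]

/-- The bridges of a tree with infinitely many vertices are the edges in excess of the vertices, so
the reduced rank is their Euler characteristic. -/
theorem IsTree.encard_orbits_bridges_hull (hG : G.IsTree) [IsFreeGroup Γ] [Group.FG Γ]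
    (hY : ∀ g : Γ, g • Y = Y) (hne : Y.Nonempty) (hfin : (orbits Γ Y).Finite) :
    (orbits Γ (G.bridges (G.hull Y))).encard = (Group.rank Γ - 1 : ℕ) := by
  obtain ⟨v₀, hv₀⟩ := hne
  have h : IsInvariantSubtree Γ G (G.hull Y) v₀ := hG.isInvariantSubtree_hull hY hv₀
  have hE : (orbits Γ (G.hull Y)).Finite := hG.finite_orbits_hull hfin
  by_cases hinf : (G.comp (G.hull Y) v₀).Infinite
  · have hdiff := hG.encard_orbits_diff_bridges h hE hinf
    have hadd := encard_orbits_add_encard_orbits_diff (Γ := Γ)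
      (fun g => by rw [← bridges_smul, h.smul_eq]) (G.bridges_subset (E₀ := G.hull Y))
    have heuler := hG.encard_orbits_add_one h hE
    rw [hdiff] at hadd
    rw [← hadd] at heuler
    have hB : (orbits Γ (G.bridges (G.hull Y))).Finite :=
      hE.subset (Set.image_mono bridges_subset)
    have hV := finite_orbits_comp (G := G) (v := v₀) hE
    rw [← hB.cast_ncard_eq, ← hV.cast_ncard_eq] at heuler
    rw [← hB.cast_ncard_eq]
    norm_cast at heuler ⊢
    omega
  · have := h.subsingleton_of_finite (Set.not_infinite.1 hinf)
    have hempty : G.bridges (G.hull Y) = ∅ := Set.eq_empty_of_forall_notMem fun e he =>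
      hinf (he.2.1.mono ((comp_mono Set.inter_subset_left).trans
        (comp_eq_of_mem (h.src_mem_comp e he.1)).subset))
    simp [hempty, orbits, Group.rank_eq_zero]

theorem IsTree.bridges_hull_eq_of_subset (hG : G.IsTree) [IsFreeGroup Γ] [Group.FG Γ]
    (hY : ∀ g : Γ, g • Y = Y) (hne : Y.Nonempty) (hY' : ∀ g : Γ, g • Y' = Y')
    (hfin : (orbits Γ Y').Finite) (hYY' : Y ⊆ Y') :
    G.bridges (G.hull Y) = G.bridges (G.hull Y') := by
  refine eq_of_subset_of_encard_orbits_le (Γ := Γ) (fun g => ?_) (bridges_mono (hull_mono hYY'))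
    ((hG.finite_orbits_hull hfin).subset (Set.image_mono bridges_subset)) ?_
  · rw [← bridges_smul, ← hull_smul, hY]
  · rw [hG.encard_orbits_bridges_hull hY hne (hfin.subset (Set.image_mono hYY')),
      hG.encard_orbits_bridges_hull hY' (hne.mono hYY') hfin]

end Hull

section Orbit

variable {V E Γ : Type*} {G : OrientedGraph V E} [LinearOrder E] [Group Γ] [MulAction Γ V]
  {C D : Subgroup Γ}

/-- The bridges of the subtrees spanned by the orbits of `C`. If `C` is free and finitely generated,
then all the orbits give the same bridges. -/
def orbitBridges (G : OrientedGraph V E) (C : Subgroup Γ) : Set E :=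
  ⋃ v, G.bridges (G.hull (MulAction.orbit C v))

theorem orbitBridges_mono (h : C ≤ D) : G.orbitBridges C ⊆ G.orbitBridges D :=
  Set.iUnion_mono fun v => bridges_mono (hull_mono (by
    rintro _ ⟨c, rfl⟩
    exact ⟨⟨c, h c.2⟩, rfl⟩))

variable [MulAction Γ E] [IsInvariant Γ G]

instance : IsInvariant C G where
  src_smul c := IsInvariant.src_smul (c : Γ)
  tgt_smul c := IsInvariant.tgt_smul (c : Γ)

variable [StrictMonoSMul Γ E]

theorem smul_orbitBridges (g : Γ) (C : Subgroup Γ) :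
    g • G.orbitBridges C = G.orbitBridges (MulAut.conj g • C) := by
  have horbit (v : V) : g • MulAction.orbit C v = MulAction.orbit ↥(MulAut.conj g • C) (g • v) := by
    ext w
    simp only [Set.mem_smul_set, MulAction.mem_orbit_iff, Subtype.exists, Subgroup.mk_smul,
      Subgroup.mem_smul_pointwise_iff_exists, exists_prop, exists_exists_and_eq_and,
      MulAut.smul_def, MulAut.conj_apply, mul_smul, inv_smul_smul]
  simp only [orbitBridges, Set.smul_set_iUnion, ← bridges_smul, ← hull_smul, horbit]
  exact (MulAction.surjective g).iUnion_comp fun v =>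
    G.bridges (G.hull (MulAction.orbit ↥(MulAut.conj g • C) v))

variable [IsCancelSMul Γ V] [LinearOrder V] [StrictMonoSMul Γ V]

theorem IsTree.orbitBridges_eq (hG : G.IsTree) [IsFreeGroup C] [Group.FG C] (v : V) :
    G.orbitBridges C = G.bridges (G.hull (MulAction.orbit C v)) := by
  have hinv (v : V) (c : C) : c • MulAction.orbit C v = MulAction.orbit C v :=
    MulAction.smul_orbit c v
  refine (Set.iUnion_subset fun w => ?_).antisymm (Set.subset_iUnion_of_subset v subset_rfl)
  have hunion : (orbits C (MulAction.orbit C v ∪ MulAction.orbit C w)).Finite :=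
    finite_orbits_of_subset_smul (K := {v, w}) (Set.toFinite _) (by
      rintro _ (⟨c, rfl⟩ | ⟨c, rfl⟩)
      · exact ⟨c, v, Or.inl rfl, rfl⟩
      · exact ⟨c, w, Or.inr rfl, rfl⟩)
  rw [hG.bridges_hull_eq_of_subset (hinv v) (MulAction.nonempty_orbit v)
    (fun c => by rw [Set.smul_set_union, hinv, hinv]) hunion Set.subset_union_left]
  exact bridges_mono (hull_mono Set.subset_union_right)

theorem IsTree.encard_orbits_orbitBridges [Nonempty V] (hG : G.IsTree) (C : Subgroup Γ)
    [IsFreeGroup C] [Group.FG C] :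
    (orbits C (G.orbitBridges C)).encard = (Group.rank C - 1 : ℕ) := by
  obtain ⟨v⟩ := ‹Nonempty V›
  rw [hG.orbitBridges_eq v]
  exact hG.encard_orbits_bridges_hull (fun c => MulAction.smul_orbit c v)
    (MulAction.nonempty_orbit v) (finite_orbits_of_subset_smul (Set.finite_singleton v)
      fun _ ⟨c, hc⟩ => ⟨c, v, rfl, hc⟩)

end Orbit

end OrientedGraph

/-! ### The Cayley tree of a free group -/

/-- The edges of the Cayley graph of `G` with respect to a family indexed by `ι`: an edge is given
by its source and its label. -/
@[ext]
structure CayleyEdge (G ι : Type*) where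
  /-- The source of the edge. -/
  vertex : G
  /-- The label of the edge. -/
  label : ι

section Cayley

open OrientedGraph

variable {G ι : Type*}

instance [LinearOrder G] [LinearOrder ι] : LinearOrder (CayleyEdge G ι) :=
  LinearOrder.lift' (fun e => toLex (e.vertex, e.label)) fun e e' h => by
    obtain ⟨hvertex, hlabel⟩ := Prod.mk.inj (toLex.injective h)
    exact CayleyEdge.ext hvertex hlabel

variable [Group G]

instance : MulAction G (CayleyEdge G ι) where
  smul g e := ⟨g * e.vertex, e.label⟩
  one_smul _ := CayleyEdge.ext (one_mul _) rfl
  mul_smul g h _ := CayleyEdge.ext (mul_assoc g h _) rfl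

instance : IsCancelSMul G (CayleyEdge G ι) where
  right_cancel' _ _ _ h := mul_right_cancel (congrArg CayleyEdge.vertex h)

instance [LinearOrder G] [MulLeftStrictMono G] : StrictMonoSMul G G where
  strictMono_smul g _ _ h := mul_lt_mul_right h g

instance [LinearOrder G] [MulLeftStrictMono G] [LinearOrder ι] :
    StrictMonoSMul G (CayleyEdge G ι) where
  strictMono_smul g _ _ h := (Prod.Lex.toLex_lt_toLex.1 h).elim
    (fun hvertex => Prod.Lex.toLex_lt_toLex.2 (Or.inl (mul_lt_mul_right hvertex g)))
    fun ⟨hvertex, hlabel⟩ =>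
      Prod.Lex.toLex_lt_toLex.2 (Or.inr ⟨congrArg (g * ·) hvertex, hlabel⟩)

/-- The Cayley graph of `G` with respect to the family `b`, on which `G` acts on the left. -/
def cayleyGraph (b : ι → G) : OrientedGraph G (CayleyEdge G ι) where
  src e := e.vertex
  tgt e := e.vertex * b e.label

instance (b : ι → G) : IsInvariant G (cayleyGraph b) where
  src_smul _ _ := rfl
  tgt_smul g e := mul_assoc g e.vertex (b e.label)

theorem mem_comp_cayleyGraph {b : ι → G} (hb : Subgroup.closure (Set.range b) = ⊤) (x y : G) :
    y ∈ (cayleyGraph b).comp Set.univ x := by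
  suffices h : ∀ y, y ∈ (cayleyGraph b).comp Set.univ 1 from comp_eq_of_mem (h x) ▸ h y
  intro y
  have hy : y ∈ Subgroup.closure (Set.range b) := hb ▸ Subgroup.mem_top y
  induction hy using Subgroup.closure_induction_right with
  | one => exact mem_comp_self
  | mul_right x _ _ hi ih =>
    obtain ⟨i, rfl⟩ := hi
    have hends : (cayleyGraph b).Ends ⟨x, i⟩ x (x * b i) := ends_src_tgt
    exact (hends.mem_comp_iff (Set.mem_univ _)).1 ih
  | mul_inv_cancel x _ _ hi ih =>
    obtain ⟨i, rfl⟩ := hi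
    have hends : (cayleyGraph b).Ends ⟨x * (b i)⁻¹, i⟩ (x * (b i)⁻¹) x :=
      Or.inl ⟨rfl, inv_mul_cancel_right x (b i)⟩
    exact (hends.mem_comp_iff (Set.mem_univ _)).2 ih

/-- A function `Φ` is a primitive of `φ` if `x ↦ (Φ, x)` is a homomorphism to a wreath product with
prescribed values at the basis. -/
theorem exists_primitive_cayleyGraph {k : Type*} [AddGroup k] (b : FreeGroupBasis ι G)
    (φ : CayleyEdge G ι → k) : ∃ Φ : G → k, ∀ x i, Φ (x * b i) = Φ x + φ ⟨x, i⟩ := by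
  let ρ : G →* (G → Multiplicative k) ⋊[mulAutArrow] G :=
    b.lift fun i => ⟨fun x => Multiplicative.ofAdd (φ ⟨x⁻¹, i⟩), b i⟩
  have hρ (i : ι) : ρ (b i) = ⟨fun x => Multiplicative.ofAdd (φ ⟨x⁻¹, i⟩), b i⟩ := by
    simp [ρ]
  have hright : SemidirectProduct.rightHom.comp ρ = MonoidHom.id G :=
    b.ext_hom _ _ fun i => by simp [hρ]
  refine ⟨fun x => ((ρ x).left 1).toAdd, fun x i => ?_⟩
  have hx : (ρ x).right = x := DFunLike.congr_fun hright x
  have hsmul (f : G → Multiplicative k) : mulAutArrow x f 1 = f (x⁻¹ * 1) := rfl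
  simp [hρ, hx, hsmul, -mulAutArrow_apply_apply]

theorem isTree_cayleyGraph (b : FreeGroupBasis ι G) : (cayleyGraph b).IsTree where
  mem_comp_univ := mem_comp_cayleyGraph (closure_range_basis b)
  exists_primitive φ :=
    let ⟨Φ, hΦ⟩ := exists_primitive_cayleyGraph b φ
    ⟨Φ, fun e => hΦ e.vertex e.label⟩

end Cayley

/-! ### Virtual reduced rank -/

section VirtualRank

variable {H : Type*} [Group H]

theorem fg_of_finiteIndex (K : Subgroup H) [K.FiniteIndex] [Group.FG K] : Group.FG H := by
  have hout (x : H) : (x : H ⧸ K).out ∈ Subgroup.closure (Set.range (Quotient.out : H ⧸ K → H)) :=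
    Subgroup.subset_closure ⟨_, rfl⟩
  have hsup : K ⊔ Subgroup.closure (Set.range (Quotient.out : H ⧸ K → H)) = ⊤ := by
    refine eq_top_iff.2 fun x _ => ?_
    have hx : (x : H ⧸ K).out⁻¹ * x ∈ K := QuotientGroup.eq.1 (Quotient.out_eq _)
    simpa using mul_mem (Subgroup.mem_sup_right (S := K) (hout x)) (Subgroup.mem_sup_left hx)
  have : Finite (Quotient (QuotientGroup.leftRel K)) := inferInstanceAs (Finite (H ⧸ K))
  rw [Group.fg_def, ← hsup]
  exact ((Group.fg_iff_subgroup_fg K).1 ‹_›).sup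
    ⟨(Set.finite_range _).toFinset, by rw [Set.Finite.coe_toFinset]⟩

open OrientedGraph in
/-- The Schreier index formula. -/
theorem rank_sub_one_eq_mul_index [IsFreeGroup H] [Group.FG H] (L : Subgroup H) [L.FiniteIndex] :
    Group.rank L - 1 = (Group.rank H - 1) * L.index := by
  classical
  obtain ⟨_, _⟩ := exists_linearOrder_mulLeftStrictMono H
  let _ : LinearOrder (IsFreeGroup.Generators H) := linearOrderOfSTO WellOrderingRel
  let G := cayleyGraph (IsFreeGroup.basis H)
  have hG : G.IsTree := isTree_cayleyGraph (IsFreeGroup.basis H)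
  have hfin : (orbits H (Set.univ : Set H)).Finite :=
    finite_orbits_of_subset_smul (Set.finite_singleton 1) fun x _ => ⟨x, 1, rfl, mul_one x⟩
  have hfinL : (orbits L (Set.univ : Set H)).Finite := by
    rw [← Set.encard_lt_top_iff, encard_orbits_subgroup L fun _ => Set.smul_set_univ,
      ENat.card_eq_coe_natCard]
    exact WithTop.mul_lt_top hfin.encard_lt_top (ENat.natCast_lt_top _)
  have hH := hG.encard_orbits_bridges_hull (Γ := H) (fun _ => Set.smul_set_univ)
    Set.univ_nonempty hfin
  have hL := hG.encard_orbits_bridges_hull (Γ := L) (fun _ => Set.smul_set_univ)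
    Set.univ_nonempty hfinL
  rw [encard_orbits_subgroup L (fun g => by rw [← bridges_smul, ← hull_smul, Set.smul_set_univ]),
    hH, ENat.card_eq_coe_natCard] at hL
  exact_mod_cast hL.symm

theorem rank_sub_one_div_index_eq {L K : Subgroup H} (h : L ≤ K) [IsFreeGroup K] [Group.FG K]
    [L.FiniteIndex] [Group.FG L] :
    ((Group.rank L - 1 : ℕ) / L.index : ℚ) = (Group.rank K - 1 : ℕ) / K.index := by
  have hne : (L.relIndex K : ℚ) ≠ 0 := Nat.cast_ne_zero.2 Subgroup.FiniteIndex.index_ne_zero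
  rw [← Subgroup.relIndex_mul_index h, ← Group.rank_congr (Subgroup.subgroupOfEquivOfLe h),
    rank_sub_one_eq_mul_index, ← Subgroup.relIndex, mul_comm, Nat.cast_mul, Nat.cast_mul,
    mul_div_mul_left _ _ hne]

theorem IsVirtRedRank.eq_div_index {r : ℚ} (hr : IsVirtRedRank H r) (M : Subgroup H)
    [M.FiniteIndex] [IsFreeGroup M] :
    ∃ _ : Group.FG M, r = (Group.rank M - 1 : ℕ) / M.index := by
  obtain ⟨K, _, _, _, rfl⟩ := hr
  have := fg_of_finiteIndex K
  exact ⟨inferInstance, (rank_sub_one_div_index_eq (inf_le_right : M ⊓ K ≤ K)).symm.trans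
    (rank_sub_one_div_index_eq inf_le_left)⟩

end VirtualRank

/-! ### Bridges of the conjugates of a subgroup -/

section Conjugates

open OrientedGraph

open scoped Pointwise

variable {G ι : Type*} [Group G] {F C D : Subgroup G} {t : G}

/-- The intersection of `F` with the conjugate `t⁻¹ C t`, as a subgroup of `F`. -/
def conjIn (F C : Subgroup G) (t : G) : Subgroup F :=
  C.comap ((MulAut.conj t).toMonoidHom.comp F.subtype)

theorem mem_conjIn {x : F} : x ∈ conjIn F C t ↔ t * x * t⁻¹ ∈ C := Iff.rfl

theorem conjIn_mono (h : C ≤ D) : conjIn F C t ≤ conjIn F D t := Subgroup.comap_mono h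

theorem conjIn_conj_smul (g : G) : conjIn F (MulAut.conj g • C) (g * t) = conjIn F C t := by
  ext x
  simp [mem_conjIn, Subgroup.mem_pointwise_smul_iff_inv_smul_mem, ← map_inv, mul_assoc]

theorem conj_smul_conjIn (f : F) : MulAut.conj f • conjIn F C (t * f) = conjIn F C t := by
  ext x
  simp [mem_conjIn, Subgroup.mem_pointwise_smul_iff_inv_smul_mem, ← map_inv, mul_assoc]

theorem exists_conjIn_mulEquiv (hC : C ≤ F.normalCore) (t : G) :
    ∃ φ : conjIn F C t ≃* C, ∀ x, (φ x : G) = t * x * t⁻¹ := by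
  refine ⟨MulEquiv.ofBijective
    (((MulAut.conj t).toMonoidHom.comp F.subtype).subgroupComap C) ⟨fun x y h => ?_, fun c => ?_⟩,
    fun x => rfl⟩
  · have h : t * x * t⁻¹ = t * y * t⁻¹ := congrArg Subtype.val h
    simpa using h
  · have hF : t⁻¹ * c * t ∈ F :=
      F.normalCore_le (by simpa using F.normalCore_normal.conj_mem c (hC c.2) t⁻¹)
    refine ⟨⟨⟨t⁻¹ * c * t, hF⟩, mem_conjIn.2 (by simp [mul_assoc])⟩, Subtype.ext ?_⟩
    change t * (t⁻¹ * c * t) * t⁻¹ = c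
    group

/-- The embedding of the Cayley graph of `F` onto the coset `t F` in the Cayley graph of `G`. -/
def cosetEdge (t : G) (e : CayleyEdge F ι) : CayleyEdge G ι := ⟨t * e.vertex, e.label⟩

theorem cosetEdge_injective (t : G) :
    Function.Injective (cosetEdge t : CayleyEdge F ι → CayleyEdge G ι) := fun _ _ h =>
  CayleyEdge.ext (Subtype.ext (mul_left_cancel (congrArg CayleyEdge.vertex h)))
    (congrArg CayleyEdge.label h :)

variable [LinearOrder F] [LinearOrder ι] {b : ι → F}

/-- The edges `⟨t, i⟩` which become bridges for the conjugate `t⁻¹ C t` when the coset `t F` is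
identified with the Cayley tree of `F`, its point `t` becoming `1`. -/
def bridgeSet (b : ι → F) (C : Subgroup G) : Set (CayleyEdge G ι) :=
  {e | ⟨1, e.label⟩ ∈ (cayleyGraph b).orbitBridges (conjIn F C e.vertex)}

theorem bridgeSet_mono (h : C ≤ D) : bridgeSet b C ⊆ bridgeSet b D :=
  fun _ he => orbitBridges_mono (conjIn_mono h) he

theorem smul_bridgeSet (g : G) (C : Subgroup G) :
    g • bridgeSet b C = bridgeSet b (MulAut.conj g • C) := by
  ext e
  have hconj : conjIn F (MulAut.conj g • C) e.vertex = conjIn F C (g⁻¹ * e.vertex) := by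
    rw [← conjIn_conj_smul g (t := g⁻¹ * e.vertex), mul_inv_cancel_left]
  rw [Set.mem_smul_set_iff_inv_smul_mem, bridgeSet, bridgeSet, Set.mem_ofPred_eq,
    Set.mem_ofPred_eq, hconj]
  rfl

theorem smul_bridgeSet_inf_normalCore (D : Subgroup G) (d : D) :
    d • bridgeSet b (D ⊓ F.normalCore) = bridgeSet b (D ⊓ F.normalCore) := by
  change (d : G) • bridgeSet b (D ⊓ F.normalCore) = _
  rw [smul_bridgeSet, Subgroup.smul_inf, Subgroup.conj_smul_eq_self_of_mem d.2,
    Subgroup.Normal.conj_smul_eq_self]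

variable [MulLeftStrictMono F]

theorem cosetEdge_mem_bridgeSet {e : CayleyEdge F ι} :
    cosetEdge t e ∈ bridgeSet b C ↔ e ∈ (cayleyGraph b).orbitBridges (conjIn F C t) := by
  have he : e.vertex⁻¹ • e = ⟨1, e.label⟩ := CayleyEdge.ext (inv_mul_cancel e.vertex) rfl
  rw [← conj_smul_conjIn e.vertex, ← smul_orbitBridges, Set.mem_smul_set_iff_inv_smul_mem, he]
  rfl

theorem setOf_mem_bridgeSet_coset :
    {e ∈ bridgeSet b C | (e.vertex : G ⧸ F) = t} =
      cosetEdge t '' (cayleyGraph b).orbitBridges (conjIn F C t) := by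
  ext e
  constructor
  · rintro ⟨he, ht⟩
    have hF : t⁻¹ * e.vertex ∈ F := QuotientGroup.eq.1 ht.symm
    have hcoset : cosetEdge t ⟨⟨_, hF⟩, e.label⟩ = e :=
      CayleyEdge.ext (mul_inv_cancel_left t e.vertex) rfl
    exact ⟨_, cosetEdge_mem_bridgeSet.1 (by rwa [hcoset]), hcoset⟩
  · rintro ⟨e, he, rfl⟩
    exact ⟨cosetEdge_mem_bridgeSet.2 he, QuotientGroup.eq.2 (by simp [cosetEdge])⟩

end Conjugates

section Count

open OrientedGraph

open scoped Pointwise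

variable {G ι : Type*} [Group G] {F C : Subgroup G} [LinearOrder F] [MulLeftStrictMono F]
  [LinearOrder ι]

theorem encard_orbits_bridgeSet_coset (b : FreeGroupBasis ι F) (hC : C ≤ F.normalCore)
    [Group.FG C] (q : G ⧸ F) :
    (orbits C {e ∈ bridgeSet b C | (e.vertex : G ⧸ F) = q}).encard = (Group.rank C - 1 : ℕ) := by
  have := b.isFreeGroup
  obtain ⟨t, rfl⟩ := QuotientGroup.mk_surjective q
  obtain ⟨φ, hφ⟩ := exists_conjIn_mulEquiv hC t
  have : Group.FG (conjIn F C t) :=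
    Group.fg_of_surjective (f := φ.symm.toMonoidHom) φ.symm.surjective
  rw [setOf_mem_bridgeSet_coset, encard_orbits_image φ.surjective (cosetEdge_injective t),
    (isTree_cayleyGraph b).encard_orbits_orbitBridges, Group.rank_congr φ]
  refine fun x e => CayleyEdge.ext ?_ rfl
  change t * (x * e.vertex) = φ x * (t * e.vertex)
  rw [hφ]
  group

theorem encard_orbits_bridgeSet [F.FiniteIndex] (b : FreeGroupBasis ι F) (hC : C ≤ F.normalCore)
    [Group.FG C] :
    (orbits C (bridgeSet b C)).encard = (F.index * (Group.rank C - 1) : ℕ) := by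
  have := Fintype.ofFinite (G ⧸ F)
  rw [encard_orbits_eq_sum fun e => (e.vertex : G ⧸ F)]
  · simp [encard_orbits_bridgeSet_coset b hC, Subgroup.index]
  · refine fun c e _ => QuotientGroup.eq.2 ?_
    have hc := F.normalCore_le (F.normalCore_normal.conj_mem _ (inv_mem (hC c.2)) e.vertex⁻¹)
    change ((c : G) * e.vertex)⁻¹ * e.vertex ∈ F
    simpa [mul_assoc] using hc

theorem IsVirtRedRank.exists_encard_orbits_bridgeSet [F.FiniteIndex] (b : FreeGroupBasis ι F)
    {D : Subgroup G} {r : ℚ} (hr : IsVirtRedRank D r) :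
    ∃ n : ℕ, (orbits D (bridgeSet b (D ⊓ F.normalCore))).encard = n ∧ (n : ℚ) = F.index * r := by
  set C := D ⊓ F.normalCore with hC
  let φ : C.subgroupOf D ≃* C := Subgroup.subgroupOfEquivOfLe inf_le_left
  have := b.isFreeGroup
  have : IsFreeGroup C :=
    IsFreeGroup.ofMulEquiv (Subgroup.subgroupOfEquivOfLe (inf_le_right.trans F.normalCore_le))
  have : IsFreeGroup (C.subgroupOf D) := IsFreeGroup.ofMulEquiv φ.symm
  have : (C.subgroupOf D).FiniteIndex := by
    rw [hC, Subgroup.inf_subgroupOf_left]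
    infer_instance
  obtain ⟨_, hrank⟩ := hr.eq_div_index (C.subgroupOf D)
  have : Group.FG C := Group.fg_of_surjective (f := φ.toMonoidHom) φ.surjective
  have hcount := encard_orbits_image φ.surjective Function.injective_id
    (fun _ _ => rfl) (bridgeSet b C)
  rw [Set.image_id, encard_orbits_bridgeSet b inf_le_right,
    encard_orbits_subgroup _ (smul_bridgeSet_inf_normalCore D), ENat.card_eq_coe_natCard,
    ← Subgroup.index] at hcount
  have hne : (C.subgroupOf D).index ≠ 0 := Subgroup.FiniteIndex.index_ne_zero
  have hfin : (orbits D (bridgeSet b C)).encard ≠ ⊤ := fun htop => by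
    rw [htop, ENat.top_mul (Nat.cast_ne_zero.2 hne)] at hcount
    exact ENat.natCast_ne_top _ hcount
  obtain ⟨n, hn⟩ := ENat.ne_top_iff_exists.1 hfin
  rw [← hn] at hcount
  refine ⟨n, hn.symm, ?_⟩
  rw [hrank, Group.rank_congr φ, ← mul_div_assoc, eq_div_iff (Nat.cast_ne_zero.2 hne)]
  exact_mod_cast hcount.symm

end Count

/-- If `G` contains a free subgroup `F` of finite index and `A, B ≤ G`, then
`r̄k(A ∩ B) ≤ [G:F] ⬝ r̄k(A) ⬝ r̄k(B)`, where `r̄k` is the virtual reduced rank. -/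
theorem virtually_free_hanna_neumann
    {G : Type*} [Group G] (F : Subgroup G) [IsFreeGroup F] [F.FiniteIndex]
    (A B : Subgroup G) (rA rB rAB : ℚ)
    (hrA : IsVirtRedRank A rA) (hrB : IsVirtRedRank B rB)
    (hrAB : IsVirtRedRank (↥(A ⊓ B)) rAB) :
    rAB ≤ (F.index : ℚ) * rA * rB := by
  classical
  obtain ⟨_, _⟩ := exists_linearOrder_mulLeftStrictMono F
  let _ : LinearOrder (IsFreeGroup.Generators F) := linearOrderOfSTO WellOrderingRel
  let b := IsFreeGroup.basis F
  obtain ⟨nA, hA, hnA⟩ := hrA.exists_encard_orbits_bridgeSet b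
  obtain ⟨nB, hB, hnB⟩ := hrB.exists_encard_orbits_bridgeSet b
  obtain ⟨nAB, hAB, hnAB⟩ := hrAB.exists_encard_orbits_bridgeSet b
  have hle := encard_orbits_inf_le A B
    (bridgeSet_mono (b := b) (inf_le_inf_right F.normalCore (inf_le_left : A ⊓ B ≤ A)))
    (bridgeSet_mono (inf_le_inf_right F.normalCore inf_le_right))
  rw [hA, hB, hAB] at hle
  have hmul : (F.index : ℚ) * rAB ≤ F.index * rA * (F.index * rB) := by
    rw [← hnA, ← hnB, ← hnAB]
    exact_mod_cast hle
  have hpos : (0 : ℚ) < F.index := Nat.cast_pos.2 F.index_ne_zero_of_finite.bot_lt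
  exact le_of_mul_le_mul_left (hmul.trans_eq (by ring)) hpos
end

section
/- (Strengthened Hanna Neumann conjecture, Friedman–Mineyev theorem.) Let A and B be finitely generated subgroups of a free group F, and let S be a system of representatives of the double cosets AsB in F (i.e., the map s ↦ AsB is a bijection from S onto the set of (A,B)-double cosets of F). Then ∑_{s∈S} r̄ank(A ∩ sBs⁻¹) ≤ r̄ank(A) · r̄ank(B); in particular, only finitely many terms of the sum are nonzero. -/
/-- The rank of a group `H` (as an element of `ℕ∞`): the minimal cardinality of a finite
generating set of `H`, or `⊤` if `H` is not finitely generated. -/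
noncomputable def grank (H : Type*) [Group H] : ℕ∞ :=
  sInf {n : ℕ∞ | ∃ s : Finset H, Subgroup.closure (s : Set H) = ⊤ ∧ n = s.card}

/-- The reduced rank `max (0, rank H - 1)` of a group `H`. -/
noncomputable def redRank (H : Type*) [Group H] : ℕ∞ :=
  grank H - 1

/-!
A free group `F` carries a bi-invariant linear order, so the Malcev–Neumann series over `F` form a
division ring, and the series supported on a subgroup `H` form a division subring `K(H)`. The Fox
derivatives of the elements of `H` span over `K(H)` a space of dimension `rank H`, and those
combinations of them whose boundary vanishes, the cycles of `H`, form a space of dimension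
`r̄ank H`. Order the positions `(x, g)` of a vector of series lexicographically. Vectors whose
smallest nonzero positions lie in distinct cosets `(x, H g)` are independent over `K(H)`, and
conversely a subspace has as many such lead cosets as its dimension. Hence `r̄ank H` counts the lead
cosets of the cycles of `H`.

If `w` is a cycle of `A ∩ sBs⁻¹`, then `w` is a cycle of `A` and `s⁻¹ w` is a cycle of `B`. So the
map `(x, C g) ↦ ((x, A g), (x, B s⁻¹ g))`, where `C = A ∩ sBs⁻¹`, sends lead cosets to pairs of lead
cosets. It is injective, and its images for distinct double cosets `AsB` are disjoint.
-/

namespace HannaNeumann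

/-! ### Bi-orders on free groups -/

section Biorder

open Polynomial

theorem freeGroup_lift_injective_of_zpow_ping_pong {ι G α : Type*} [Nontrivial ι] [Group G]
    [MulAction G α] (a : ι → G) (Y : ι → Set α) (hne : ∀ i, (Y i).Nonempty)
    (hdisj : Pairwise (Function.onFun Disjoint Y))
    (hmaps : Pairwise fun i j => ∀ n : ℤ, n ≠ 0 → Set.MapsTo (a i ^ n • ·) (Y j) (Y i)) :
    Function.Injective (FreeGroup.lift a) := by
  have hlift : FreeGroup.lift a =
      (Monoid.CoprodI.lift fun i => FreeGroup.lift fun _ : Unit => a i).comp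
        freeGroupEquivCoprodI.toMonoidHom := by
    ext i
    simp
  rw [hlift, MonoidHom.coe_comp]
  refine Function.Injective.comp ?_ freeGroupEquivCoprodI.injective
  refine Monoid.CoprodI.lift_injective_of_ping_pong (fun i => FreeGroup.lift fun _ : Unit => a i)
    (Or.inr ⟨Classical.arbitrary ι, ?_⟩) Y hne hdisj fun i j hij g hg => ?_
  · rw [FreeGroup.freeGroupUnitEquivInt.cardinal_eq, Cardinal.mk_denumerable]
    exact Cardinal.natCast_le_aleph0
  · obtain ⟨n, rfl⟩ := FreeGroup.freeGroupUnitEquivInt.symm.surjective g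
    have hn : n ≠ 0 := by
      rintro rfl
      exact hg (zpow_zero _)
    have hpow : FreeGroup.lift (fun _ : Unit => a i) (FreeGroup.freeGroupUnitEquivInt.symm n) =
        a i ^ n := by
      simp [FreeGroup.freeGroupUnitEquivInt]
    rw [hpow]
    exact (hmaps hij n hn).image_subset

/-- The unit `1 + ξ` attached to an element `ξ` of square zero. -/
def oneAddUnit {R : Type*} [Ring R] {ξ : R} (hξ : ξ * ξ = 0) : Rˣ where
  val := 1 + ξ
  inv := 1 - ξ
  val_inv := by simp [add_mul, mul_sub, hξ]
  inv_val := by simp [mul_add, sub_mul, hξ]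

theorem val_oneAddUnit_zpow {R : Type*} [Ring R] {ξ : R} (hξ : ξ * ξ = 0) (n : ℤ) :
    ((oneAddUnit hξ ^ n : Rˣ) : R) = 1 + n • ξ := by
  induction n with
  | zero => simp
  | succ n ih =>
    rw [zpow_add_one, Units.val_mul, ih]
    simp only [oneAddUnit, mul_add, add_mul, one_mul, mul_one, smul_mul_assoc, hξ, smul_zero,
      add_zero, add_smul, one_smul]
    abel
  | pred n ih =>
    rw [zpow_sub_one, Units.val_mul, ih]
    simp only [oneAddUnit, Units.inv_mk, mul_sub, add_mul, one_mul, mul_one, smul_mul_assoc, hξ,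
      smul_zero, add_zero, sub_smul, one_smul]
    abel

/-- The operator on functions on words which moves the value at `w` to the word `x :: w` if `w`
does not start with `x`, and discards it otherwise; this restriction makes its square vanish. -/
noncomputable def prepend {X : Type*} (x : X) : Module.End ℤ (List X → ℤ) := by
  classical
  exact
  { toFun := fun m v => if v.head? = some x ∧ v.tail.head? ≠ some x then m v.tail else 0
    map_add' := fun m n => by ext v; simp only [Pi.add_apply]; split_ifs <;> simp
    map_smul' := fun c m => by ext v; simp }

theorem prepend_mul_self {X : Type*} (x : X) : prepend x * prepend x = 0 := by
  classical
  ext m v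
  simp only [prepend, Module.End.mul_apply, LinearMap.coe_mk, AddHom.coe_mk,
    LinearMap.zero_apply, Pi.zero_apply]
  grind

theorem prepend_apply_cons {X : Type*} {x y : X} (hxy : x ≠ y) (m : List X → ℤ) (w : List X) :
    prepend x m (x :: y :: w) = m (y :: w) := by
  simp [prepend, hxy.symm]

theorem exists_eq_cons_of_prepend_apply_ne_zero {X : Type*} {x : X} {m : List X → ℤ} {v : List X}
    (hv : prepend x m v ≠ 0) : ∃ u, v = x :: u ∧ m u ≠ 0 := by
  classical
  obtain - | ⟨y, u⟩ := v
  · simp [prepend] at hv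
  · simp only [prepend, LinearMap.coe_mk, AddHom.coe_mk, List.head?_cons, List.tail_cons] at hv
    grind

/-- The functions on words whose support contains words of maximal length, all of which start
with `x`. -/
def startingWith {X : Type*} (x : X) : Set (List X → ℤ) :=
  {m | ∃ w, m (x :: w) ≠ 0 ∧
    ∀ v, m v ≠ 0 → v.length ≤ w.length + 1 ∧ (v.length = w.length + 1 → v.head? = some x)}

theorem startingWith_nonempty {X : Type*} (x : X) : (startingWith x).Nonempty := by
  classical
  refine ⟨Pi.single [x] 1, [], by simp, fun v hv => ?_⟩
  obtain rfl : v = [x] := by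
    by_contra h
    simp [h] at hv
  simp

theorem pairwise_disjoint_startingWith (X : Type*) :
    Pairwise (Function.onFun Disjoint (startingWith (X := X))) := by
  refine fun x y hxy => Set.disjoint_left.2 ?_
  rintro m ⟨w, hw, hm⟩ ⟨w', hw', hm'⟩
  have hle := (hm' _ hw).1
  have hhead := hm _ hw'
  simp only [List.length_cons, List.head?_cons, Option.some.injEq] at hle hhead
  exact hxy (hhead.2 (by omega)).symm

theorem mapsTo_startingWith {X : Type*} {x y : X} (hxy : x ≠ y) {n : ℤ} (hn : n ≠ 0) :
    Set.MapsTo (oneAddUnit (prepend_mul_self x) ^ n • ·) (startingWith y) (startingWith x) := by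
  rintro m ⟨w, hw, hm⟩
  have happ (v : List X) :
      (oneAddUnit (prepend_mul_self x) ^ n • m) v = m v + n * prepend x m v := by
    rw [Units.smul_def, val_oneAddUnit_zpow]
    simp
  have hzero : m (x :: y :: w) = 0 := by
    by_contra h
    simpa using (hm _ h).1
  refine ⟨y :: w, ?_, fun v hv => ?_⟩
  · dsimp only
    rw [happ, hzero, prepend_apply_cons hxy, zero_add]
    exact mul_ne_zero hn hw
  · dsimp only at hv
    rw [happ] at hv
    by_cases h : m v = 0
    · rw [h, zero_add] at hv
      obtain ⟨u, rfl, hu⟩ := exists_eq_cons_of_prepend_apply_ne_zero (right_ne_zero_of_mul hv)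
      simpa using (hm u hu).1
    · have := (hm v h).1
      simp only [List.length_cons]
      exact ⟨by omega, by omega⟩

theorem C_mul_X_mul_self {R : Type*} [Ring R] {ξ : R} (hξ : ξ * ξ = 0) :
    (C ξ * X) * (C ξ * X) = 0 := by
  rw [mul_assoc, ← mul_assoc X, X_mul_C, mul_assoc, ← mul_assoc, ← C_mul, hξ, C_0, zero_mul]

/-- The Magnus representation `x ↦ 1 + t ξₓ` of a free group, with the `ξₓ` realised as the
operators `prepend x`. -/
noncomputable def magnusHom (X : Type*) :
    FreeGroup X →* ((Module.End ℤ (List X → ℤ))[X])ˣ :=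
  FreeGroup.lift fun x => oneAddUnit (C_mul_X_mul_self (prepend_mul_self x))

-- Setting `t = 1` already gives a faithful representation.
theorem magnusHom_injective (X : Type*) [Nontrivial X] : Function.Injective (magnusHom X) := by
  let evalOne : (Module.End ℤ (List X → ℤ))[X] →+* Module.End ℤ (List X → ℤ) :=
    eval₂RingHom' (RingHom.id _) 1 fun a => Commute.one_right a
  have hcomp : (Units.map evalOne.toMonoidHom).comp (magnusHom X) =
      FreeGroup.lift fun x => oneAddUnit (prepend_mul_self x) := by
    ext x : 2
    simp [magnusHom, evalOne, oneAddUnit]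
  have hinj := freeGroup_lift_injective_of_zpow_ping_pong
    (fun x : X => oneAddUnit (prepend_mul_self x)) startingWith startingWith_nonempty
    (pairwise_disjoint_startingWith X) fun _ _ hxy _ hn => mapsTo_startingWith hxy hn
  rw [← hcomp, MonoidHom.coe_comp] at hinj
  exact hinj.of_comp

theorem coeff_zero_magnusHom {X : Type*} (g : FreeGroup X) :
    (magnusHom X g : (Module.End ℤ (List X → ℤ))[X]).coeff 0 = 1 := by
  have hker : (Units.map (constantCoeff (R := Module.End ℤ (List X → ℤ))).toMonoidHom).comp
      (magnusHom X) = 1 := by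
    ext x : 2
    simp [magnusHom, oneAddUnit]
  exact congrArg Units.val (DFunLike.congr_fun hker g)

/-- The polynomials whose lowest nonzero coefficient is sent to a positive element by `e`. -/
def IsLowestPos {R L : Type*} [Ring R] [AddCommGroup L] [LinearOrder L] (e : R →+ L)
    (p : R[X]) : Prop :=
  ∃ n q, p = q * X ^ n ∧ 0 < e (q.coeff 0)

section IsLowestPos

variable {R L : Type*} [Ring R] [AddCommGroup L] [LinearOrder L] {e : R →+ L} {p h : R[X]}

theorem isLowestPos_iff :
    IsLowestPos e p ↔ ∃ n, (∀ k < n, p.coeff k = 0) ∧ 0 < e (p.coeff n) := by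
  refine exists_congr fun n => ⟨?_, fun ⟨hlt, hpos⟩ => ?_⟩
  · rintro ⟨q, rfl, hq⟩
    exact ⟨fun k hk => by simp [coeff_mul_X_pow', hk], by simpa [coeff_mul_X_pow'] using hq⟩
  · obtain ⟨q, rfl⟩ := X_pow_dvd_iff.2 hlt
    rw [X_pow_mul] at hpos ⊢
    exact ⟨q, rfl, by simpa [coeff_mul_X_pow'] using hpos⟩

theorem IsLowestPos.mul_left (hp : IsLowestPos e p) (hh : h.coeff 0 = 1) :
    IsLowestPos e (h * p) := by
  obtain ⟨n, q, rfl, hq⟩ := hp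
  exact ⟨n, h * q, (mul_assoc _ _ _).symm, by rwa [mul_coeff_zero, hh, one_mul]⟩

theorem IsLowestPos.mul_right (hp : IsLowestPos e p) (hh : h.coeff 0 = 1) :
    IsLowestPos e (p * h) := by
  obtain ⟨n, q, rfl, hq⟩ := hp
  exact ⟨n, q * h, by rw [mul_assoc, X_pow_mul, mul_assoc], by rwa [mul_coeff_zero, hh, mul_one]⟩

end IsLowestPos

theorem exists_biorder_of_polynomial {G R L : Type*} [Group G] [Ring R] [AddCommGroup L]
    [LinearOrder L] [IsOrderedAddMonoid L] {e : R →+ L} (he : Function.Injective e)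
    {φ : G →* R[X]ˣ} (hφ : Function.Injective φ) (hφ₀ : ∀ g, (φ g : R[X]).coeff 0 = 1) :
    ∃ _ : LinearOrder G, MulLeftMono G ∧ MulRightMono G := by
  let E : G → Lex (ℕ → L) := fun g => toLex fun n => e ((φ g : R[X]).coeff n)
  have hE : Function.Injective E := fun g h hgh =>
    hφ (Units.ext (Polynomial.ext fun n => he (congrFun hgh n)))
  let _ : LinearOrder G := LinearOrder.lift' E hE
  have hlt (g h : G) : g < h ↔ IsLowestPos e (φ h - φ g : R[X]) := by
    rw [isLowestPos_iff]
    change (∃ n, (∀ k < n, e ((φ g : R[X]).coeff k) = e ((φ h : R[X]).coeff k)) ∧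
      e ((φ g : R[X]).coeff n) < e ((φ h : R[X]).coeff n)) ↔ _
    simp only [coeff_sub, map_sub, sub_pos, sub_eq_zero, he.eq_iff,
      eq_comm (a := (φ g : R[X]).coeff _)]
  have hleft : MulLeftStrictMono G := ⟨fun k g h hgh => by
    rw [hlt] at hgh ⊢
    simpa only [map_mul, Units.val_mul, mul_sub] using hgh.mul_left (hφ₀ k)⟩
  have hright : MulRightStrictMono G := ⟨fun k g h hgh => by
    change g * k < h * k
    rw [hlt] at hgh ⊢
    simpa only [map_mul, Units.val_mul, sub_mul] using hgh.mul_right (hφ₀ k)⟩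
  exact ⟨inferInstance, mulLeftMono_of_mulLeftStrictMono G, mulRightMono_of_mulRightStrictMono G⟩

theorem exists_biorder (F : Type*) [Group F] [IsFreeGroup F] :
    ∃ _ : LinearOrder F, MulLeftMono F ∧ MulRightMono F := by
  -- Two further generators are added because ping-pong needs at least two of them.
  let Y := IsFreeGroup.Generators F ⊕ Bool
  have : Nontrivial Y := Sum.inr_injective.nontrivial
  obtain ⟨_, _⟩ := exists_wellFoundedLT ((List Y → ℤ) × List Y)
  let entries : Module.End ℤ (List Y → ℤ) →+ Lex ((List Y → ℤ) × List Y → ℤ) :=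
    { toFun := fun T => toLex fun p => T p.1 p.2
      map_zero' := rfl
      map_add' := fun _ _ => rfl }
  have hentries : Function.Injective entries := fun S T hST => by
    ext m w
    exact congrFun hST (m, w)
  let embed : F →* FreeGroup Y :=
    (FreeGroup.map Sum.inl).comp (IsFreeGroup.toFreeGroup F).toMonoidHom
  have hembed : Function.Injective embed :=
    (FreeGroup.map_injective Sum.inl_injective).comp (IsFreeGroup.toFreeGroup F).injective
  exact exists_biorder_of_polynomial hentries (φ := (magnusHom Y).comp embed)
    ((magnusHom_injective Y).comp hembed) fun g => coeff_zero_magnusHom (embed g)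

end Biorder

/-! ### Malcev–Neumann series -/

section Finsum

theorem finsum_comm_of_finite_support {α β M : Type*} [AddCommMonoid M] {f : α → β → M}
    (hf : (Function.support fun p : α × β => f p.1 p.2).Finite) :
    ∑ᶠ a, ∑ᶠ b, f a b = ∑ᶠ b, ∑ᶠ a, f a b := by
  have hf' : (Function.support fun p : β × α => f p.2 p.1).Finite :=
    (hf.image Prod.swap).subset fun p hp => ⟨p.swap, hp, rfl⟩
  rw [← finsum_curry (fun p : α × β => f p.1 p.2) hf,
    ← finsum_curry (fun p : β × α => f p.2 p.1) hf', ← finsum_comp_equiv (Equiv.prodComm α β)]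
  rfl

theorem exists_ne_zero_of_finsum_ne_zero {α M : Type*} [AddCommMonoid M] {f : α → M}
    (hf : ∑ᶠ a, f a ≠ 0) : ∃ a, f a ≠ 0 := by
  by_contra! hzero
  exact hf (finsum_eq_zero_of_forall_eq_zero hzero)

end Finsum

theorem isUnit_of_forall_exists_mul_eq_one {R : Type*} [Ring R] [Nontrivial R]
    (hR : ∀ a : R, a ≠ 0 → ∃ c, a * c = 1) {a : R} (ha : a ≠ 0) : IsUnit a := by
  obtain ⟨c, hac⟩ := hR a ha
  obtain ⟨d, hcd⟩ := hR c (right_ne_zero_of_mul_eq_one hac)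
  obtain rfl := left_inv_eq_right_inv hac hcd
  exact ⟨⟨a, c, hac, hcd⟩, rfl⟩

/-- Malcev–Neumann series: formal sums of elements of an ordered group `G`, with coefficients in
`K` and partially well-ordered support. As `G` is written multiplicatively, the convolution product
has to be defined here: that of `HahnSeries` is for commutative additive monoids of exponents. -/
abbrev Series (G K : Type*) [PartialOrder G] [Zero K] : Type _ := HahnSeries G K

namespace Series

open Pointwise

theorem exists_coeff_ne_zero_forall_lt {G K : Type*} [LinearOrder G] [Zero K]
    {f : Series G K} (hf : f ≠ 0) : ∃ a, f.coeff a ≠ 0 ∧ ∀ b < a, f.coeff b = 0 := by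
  have hne : f.support.Nonempty := HahnSeries.support_nonempty_iff.2 hf
  refine ⟨f.isWF_support.min hne, f.isWF_support.min_mem hne, fun b hb => ?_⟩
  by_contra h
  exact f.isWF_support.not_lt_min hne h hb

section Support

variable {G : Type*} [Group G] [LinearOrder G] [MulLeftMono G] [MulRightMono G]

theorem isPWO_mul {s t : Set G} (hs : s.IsPWO) (ht : t.IsPWO) : (s * t).IsPWO := by
  rw [← Set.image_mul_prod]
  exact (hs.prod ht).image_of_monotone fun _ _ hpq => mul_le_mul' hpq.1 hpq.2

theorem finite_setOf_inv_mul_mem {s t : Set G} (hs : s.IsPWO) (ht : t.IsPWO) (a : G) :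
    {b | b ∈ s ∧ b⁻¹ * a ∈ t}.Finite := by
  have : IsOrderedCancelSMul G G :=
    { smul_le_smul_left := fun _ _ hab c => mul_le_mul_right hab c
      smul_le_smul_right := fun _ _ hcd a => mul_le_mul_left hcd a
      le_of_smul_le_smul_left := fun _ _ _ h => le_of_mul_le_mul_left' h
      le_of_smul_le_smul_right := fun _ _ _ h => le_of_mul_le_mul_right' h }
  refine ((Set.SMulAntidiagonal.finite_of_isPWO hs ht a).image Prod.fst).subset ?_
  rintro b ⟨hb, hba⟩
  exact ⟨(b, b⁻¹ * a), ⟨hb, hba, mul_inv_cancel_left b a⟩, rfl⟩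

theorem isPWO_submonoid_closure {s : Set G} (hs : s.IsPWO) (hone : ∀ x ∈ s, 1 ≤ x) :
    (Submonoid.closure s : Set G).IsPWO := by
  rw [Submonoid.closure_eq_image_prod]
  refine (hs.partiallyWellOrderedOn_sublistForall₂ (· ≤ ·)).image_of_monotone_on ?_
  exact fun l₁ _ l₂ hl₂ h₁₂ => h₁₂.prod_le_prod' fun x hx => hone x <| hl₂ x hx

end Support

section Ring

variable {G K : Type*} [Group G] [LinearOrder G] [Ring K]

noncomputable instance : One (Series G K) := ⟨HahnSeries.single 1 1⟩

theorem one_def : (1 : Series G K) = HahnSeries.single 1 1 := rfl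

theorem coeff_one_of_ne {a : G} (ha : a ≠ 1) : (1 : Series G K).coeff a = 0 :=
  HahnSeries.coeff_single_of_ne ha

@[simp] theorem coeff_one_one : (1 : Series G K).coeff 1 = 1 :=
  HahnSeries.coeff_single_same 1 1

instance [Nontrivial K] : Nontrivial (Series G K) :=
  ⟨1, 0, HahnSeries.ne_zero_of_coeff_ne_zero (g := 1) (by simp)⟩

variable [MulLeftMono G] [MulRightMono G]

noncomputable instance : Mul (Series G K) where
  mul f g :=
    { coeff := fun a => ∑ᶠ b, f.coeff b * g.coeff (b⁻¹ * a)
      isPWO_support' := (isPWO_mul f.isPWO_support g.isPWO_support).mono fun a ha => by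
        obtain ⟨b, hb⟩ := exists_ne_zero_of_finsum_ne_zero ha
        exact ⟨b, left_ne_zero_of_mul hb, b⁻¹ * a, right_ne_zero_of_mul hb,
          mul_inv_cancel_left b a⟩ }

theorem coeff_mul (f g : Series G K) (a : G) :
    (f * g).coeff a = ∑ᶠ b, f.coeff b * g.coeff (b⁻¹ * a) := rfl

theorem finite_support_coeff_mul (f g : Series G K) (a : G) :
    (Function.support fun b => f.coeff b * g.coeff (b⁻¹ * a)).Finite :=
  (finite_setOf_inv_mul_mem f.isPWO_support g.isPWO_support a).subset fun _ hb =>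
    ⟨left_ne_zero_of_mul hb, right_ne_zero_of_mul hb⟩

theorem exists_of_coeff_mul_ne_zero {f g : Series G K} {a : G} (h : (f * g).coeff a ≠ 0) :
    ∃ b, f.coeff b ≠ 0 ∧ g.coeff (b⁻¹ * a) ≠ 0 := by
  obtain ⟨b, hb⟩ := exists_ne_zero_of_finsum_ne_zero h
  exact ⟨b, left_ne_zero_of_mul hb, right_ne_zero_of_mul hb⟩

theorem coeff_single_mul (g : G) (r : K) (f : Series G K) (a : G) :
    ((HahnSeries.single g r : Series G K) * f).coeff a = r * f.coeff (g⁻¹ * a) := by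
  rw [coeff_mul, finsum_eq_single _ g, HahnSeries.coeff_single_same]
  exact fun b hb => by rw [HahnSeries.coeff_single_of_ne hb, zero_mul]

theorem coeff_mul_single (g : G) (r : K) (f : Series G K) (a : G) :
    (f * (HahnSeries.single g r : Series G K)).coeff a = f.coeff (a * g⁻¹) * r := by
  rw [coeff_mul, finsum_eq_single _ (a * g⁻¹)]
  · simp
  · intro b hb
    rw [HahnSeries.coeff_single_of_ne, mul_zero]
    rintro rfl
    simp at hb

theorem finite_support_coeff_mul_mul (f g h : Series G K) (a : G) :
    (Function.support fun p : G × G =>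
      f.coeff p.2 * g.coeff (p.2⁻¹ * p.1) * h.coeff (p.1⁻¹ * a)).Finite := by
  have hb := finite_setOf_inv_mul_mem (isPWO_mul f.isPWO_support g.isPWO_support)
    h.isPWO_support a
  have hc := finite_setOf_inv_mul_mem f.isPWO_support
    (isPWO_mul g.isPWO_support h.isPWO_support) a
  refine (hb.prod hc).subset ?_
  rintro ⟨b, c⟩ hbc
  have hf := left_ne_zero_of_mul (left_ne_zero_of_mul hbc)
  have hg := right_ne_zero_of_mul (left_ne_zero_of_mul hbc)
  have hh := right_ne_zero_of_mul hbc
  exact ⟨⟨⟨c, hf, c⁻¹ * b, hg, mul_inv_cancel_left c b⟩, hh⟩,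
    hf, c⁻¹ * b, hg, b⁻¹ * a, hh, by group⟩

protected theorem mul_assoc (f g h : Series G K) : f * g * h = f * (g * h) := by
  ext a
  calc (f * g * h).coeff a
      = ∑ᶠ b, ∑ᶠ c, f.coeff c * g.coeff (c⁻¹ * b) * h.coeff (b⁻¹ * a) :=
        finsum_congr fun b => finsum_mul' _ _ (finite_support_coeff_mul f g b)
    _ = ∑ᶠ c, ∑ᶠ b, f.coeff c * g.coeff (c⁻¹ * b) * h.coeff (b⁻¹ * a) :=
        finsum_comm_of_finite_support (finite_support_coeff_mul_mul f g h a)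
    _ = ∑ᶠ c, ∑ᶠ d, f.coeff c * (g.coeff d * h.coeff (d⁻¹ * (c⁻¹ * a))) :=
        finsum_congr fun c => by
          rw [← finsum_comp_equiv (Equiv.mulLeft c)]
          simp [mul_assoc]
    _ = (f * (g * h)).coeff a :=
        finsum_congr fun c => (mul_finsum' _ _ (finite_support_coeff_mul g h (c⁻¹ * a))).symm

noncomputable instance : Ring (Series G K) :=
  { (inferInstance : AddCommGroup (Series G K)) with
    mul := (· * ·)
    one := 1
    mul_assoc := Series.mul_assoc
    one_mul := fun f => by ext a; rw [one_def, coeff_single_mul]; simp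
    mul_one := fun f => by ext a; rw [one_def, coeff_mul_single]; simp
    zero_mul := fun f => by ext a; simp [coeff_mul]
    mul_zero := fun f => by ext a; simp [coeff_mul]
    left_distrib := fun f g h => by
      ext a
      simp only [HahnSeries.coeff_add, coeff_mul, mul_add]
      exact finsum_add_distrib (finite_support_coeff_mul f g a) (finite_support_coeff_mul f h a)
    right_distrib := fun f g h => by
      ext a
      simp only [HahnSeries.coeff_add, coeff_mul, add_mul]
      exact finsum_add_distrib (finite_support_coeff_mul f h a) (finite_support_coeff_mul g h a) }

theorem single_mul_single (g h : G) (r s : K) :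
    (HahnSeries.single g r * HahnSeries.single h s : Series G K) =
      HahnSeries.single (g * h) (r * s) := by
  ext a
  rw [coeff_single_mul]
  by_cases ha : a = g * h
  · simp [ha]
  · rw [HahnSeries.coeff_single_of_ne ha, HahnSeries.coeff_single_of_ne, mul_zero]
    rwa [ne_eq, inv_mul_eq_iff_eq_mul]

/-- The group elements as monomials. -/
noncomputable def mono : G →* Series G K where
  toFun g := HahnSeries.single g 1
  map_one' := rfl
  map_mul' g h := by rw [single_mul_single, mul_one]

@[simp] theorem coeff_mono_mul (g : G) (f : Series G K) (a : G) :
    (mono g * f).coeff a = f.coeff (g⁻¹ * a) :=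
  (coeff_single_mul g 1 f a).trans (one_mul _)

@[simp] theorem coeff_mul_mono (g : G) (f : Series G K) (a : G) :
    (f * mono g).coeff a = f.coeff (a * g⁻¹) :=
  (coeff_mul_single g 1 f a).trans (mul_one _)

@[simp] theorem coeff_mono_self (g : G) : (mono g : Series G K).coeff g = 1 :=
  HahnSeries.coeff_single_same g 1

theorem coeff_mono_of_ne {g a : G} (h : a ≠ g) : (mono g : Series G K).coeff a = 0 :=
  HahnSeries.coeff_single_of_ne h

theorem mono_injective [Nontrivial K] : Function.Injective (mono : G → Series G K) := by
  intro g h hgh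
  by_contra hne
  have := congrArg (fun f => f.coeff g) hgh
  simp [coeff_mono_of_ne hne] at this

theorem coeff_mul_mul_of_forall_lt {f g : Series G K} {a b : G} (hf : ∀ c < a, f.coeff c = 0)
    (hg : ∀ c < b, g.coeff c = 0) : (f * g).coeff (a * b) = f.coeff a * g.coeff b := by
  rw [coeff_mul, finsum_eq_single _ a]
  · rw [inv_mul_cancel_left]
  · intro c hc
    obtain hlt | hgt := hc.lt_or_gt
    · rw [hf c hlt, zero_mul]
    · rw [hg, mul_zero]
      rw [inv_mul_lt_iff_lt_mul]
      exact mul_lt_mul_left hgt b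

theorem coeff_mul_eq_zero_of_lt {f g : Series G K} {a b : G} (hf : ∀ c < a, f.coeff c = 0)
    (hg : ∀ c < b, g.coeff c = 0) {c : G} (hc : c < a * b) : (f * g).coeff c = 0 := by
  by_contra h
  obtain ⟨d, hd, hdc⟩ := exists_of_coeff_mul_ne_zero h
  have had : a ≤ d := not_lt.1 fun h => hd (hf d h)
  have hbd : b ≤ d⁻¹ * c := not_lt.1 fun h => hdc (hg _ h)
  exact hc.not_ge ((mul_le_mul' had hbd).trans_eq (mul_inv_cancel_left d c))

/-- The solution is constructed by recursion along the submonoid generated by the support of `u`,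
which is well-ordered. -/
theorem exists_eq_one_add_mul {u : Series G K} (hu : ∀ a, u.coeff a ≠ 0 → 1 < a) :
    ∃ v, v = 1 + u * v := by
  classical
  let P := Submonoid.closure u.support
  have hP : (P : Set G).IsPWO := isPWO_submonoid_closure u.isPWO_support fun x hx => (hu x hx).le
  have hmem {b a : G} (hb : u.coeff b ≠ 0) (hba : b⁻¹ * a ∈ P) : a ∈ P := by
    simpa using P.mul_mem (Submonoid.subset_closure hb) hba
  have hlt {b a : G} (hb : u.coeff b ≠ 0) : b⁻¹ * a < a :=
    inv_mul_lt_iff_lt_mul.2 (lt_mul_of_one_lt_left' a (hu b hb))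
  have hwf := Set.wellFoundedOn_iff.1 hP.isWF
  let v : G → K := hwf.fix fun a rec => (1 : Series G K).coeff a +
    ∑ᶠ b, if h : u.coeff b ≠ 0 ∧ b⁻¹ * a ∈ P then
      u.coeff b * rec (b⁻¹ * a) ⟨hlt h.1, h.2, hmem h.1 h.2⟩ else 0
  have hv (a : G) : v a = (1 : Series G K).coeff a +
      ∑ᶠ b, if u.coeff b ≠ 0 ∧ b⁻¹ * a ∈ P then u.coeff b * v (b⁻¹ * a) else 0 :=
    (hwf.fix_eq _ a).trans (by simp only [dite_eq_ite]; rfl)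
  have hv₀ {a : G} (ha : a ∉ P) : v a = 0 := by
    rw [hv, coeff_one_of_ne (by rintro rfl; exact ha P.one_mem), zero_add]
    exact finsum_eq_zero_of_forall_eq_zero fun b => if_neg fun h => ha (hmem h.1 h.2)
  refine ⟨⟨v, hP.mono fun a ha => by_contra fun h => ha (hv₀ h)⟩, ?_⟩
  ext a
  rw [HahnSeries.coeff_add, coeff_mul]
  refine (hv a).trans (congrArg _ (finsum_congr fun b => ?_))
  split_ifs with h
  · rfl
  · obtain hb | hba := not_and_or.1 h
    · rw [not_not.1 hb, zero_mul]
    · exact (mul_eq_zero_of_right _ (hv₀ hba)).symm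

end Ring

section DivisionRing

variable {G K : Type*} [Group G] [LinearOrder G] [MulLeftMono G] [MulRightMono G] [DivisionRing K]

theorem exists_mul_eq_one {f : Series G K} (hf : f ≠ 0) : ∃ g, f * g = 1 := by
  obtain ⟨a, ha, hmin⟩ := exists_coeff_ne_zero_forall_lt hf
  let k : Series G K := HahnSeries.single a⁻¹ (f.coeff a)⁻¹
  let k' : Series G K := HahnSeries.single a (f.coeff a)
  have hk : k' * k = 1 := by rw [single_mul_single, mul_inv_cancel, mul_inv_cancel₀ ha, one_def]
  have hu (b : G) (hb : (1 - k * f).coeff b ≠ 0) : 1 < b := by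
    contrapose! hb
    rw [HahnSeries.coeff_sub, coeff_single_mul, inv_inv]
    obtain rfl | hlt := hb.eq_or_lt
    · simp [ha]
    · rw [hmin _ (mul_lt_of_lt_one_right' a hlt), coeff_one_of_ne hlt.ne, mul_zero, sub_zero]
  obtain ⟨v, hv⟩ := exists_eq_one_add_mul hu
  have hkfv : k * f * v = 1 := by
    rw [sub_mul, one_mul] at hv
    exact (sub_sub_cancel v _).symm.trans (sub_eq_of_eq_add hv)
  refine ⟨v * k, ?_⟩
  calc f * (v * k) = k' * (k * f * v) * k := by
        simp only [← mul_assoc, hk, one_mul]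
    _ = 1 := by rw [hkfv, mul_one, hk]

end DivisionRing

end Series

/-! ### Series supported on a subgroup -/

namespace Series

section SupportedOn

variable (K : Type*) {G : Type*} [Group G] [LinearOrder G] [MulLeftMono G] [MulRightMono G] [Ring K]

/-- The ring of series supported on a subgroup `H`. -/
def supportedOn (H : Subgroup G) : Subring (Series G K) where
  carrier := {f | ∀ a, f.coeff a ≠ 0 → a ∈ H}
  zero_mem' _ h := absurd rfl h
  one_mem' a h := by
    obtain rfl : a = 1 := by_contra fun ha => h (coeff_one_of_ne ha)
    exact H.one_mem
  add_mem' {f g} hf hg a h := by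
    by_cases hfa : f.coeff a = 0
    · exact hg a fun hga => h (by rw [HahnSeries.coeff_add, hfa, hga, add_zero])
    · exact hf a hfa
  neg_mem' {f} hf a h := hf a fun hfa => h (by rw [HahnSeries.coeff_neg, hfa, neg_zero])
  mul_mem' {f g} hf hg a h := by
    obtain ⟨b, hfb, hgb⟩ := exists_of_coeff_mul_ne_zero h
    exact (H.mul_mem_cancel_left (H.inv_mem (hf b hfb))).1 (hg _ hgb)

variable {K} {H : Subgroup G}

theorem coeff_eq_zero_of_notMem {f : Series G K} (hf : f ∈ supportedOn K H) {a : G} (ha : a ∉ H) :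
    f.coeff a = 0 :=
  by_contra fun h => ha (hf a h)

theorem supportedOn_mono {H' : Subgroup G} (h : H ≤ H') :
    supportedOn K H ≤ supportedOn K H' :=
  fun _ hf a ha => h (hf a ha)

theorem mono_mem_supportedOn {g : G} (hg : g ∈ H) : (mono g : Series G K) ∈ supportedOn K H := by
  intro a ha
  obtain rfl : a = g := by_contra fun h => ha (coeff_mono_of_ne h)
  exact hg

theorem indicator_coeff_mul {d : Series G K} (hd : d ∈ supportedOn K H) (f : Series G K) (a : G) :
    Set.indicator H (d * f).coeff a =
      ∑ᶠ b, d.coeff b * Set.indicator H f.coeff (b⁻¹ * a) := by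
  have hterm (b : G) : d.coeff b * Set.indicator H f.coeff (b⁻¹ * a) =
      Set.indicator H (fun _ => d.coeff b * f.coeff (b⁻¹ * a)) a := by
    by_cases hb : b ∈ H
    · have hba : b⁻¹ * a ∈ H ↔ a ∈ H := H.mul_mem_cancel_left (H.inv_mem hb)
      by_cases ha : a ∈ H <;> simp [hba, ha]
    · simp [coeff_eq_zero_of_notMem hd hb]
  simp only [hterm]
  by_cases ha : a ∈ H <;> simp [ha, coeff_mul]

/-- Restriction of the support to `H`; it is linear over the series supported on `H`, and so it
makes that ring a direct summand of `Series G K`. -/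
noncomputable def trunc (H : Subgroup G) :
    Series G K →ₗ[supportedOn K H] supportedOn K H where
  toFun f :=
    ⟨⟨Set.indicator H f.coeff, f.isPWO_support.mono fun _ h => (Set.indicator_apply_ne_zero.1 h).2⟩,
      fun _ => Set.mem_of_indicator_ne_zero⟩
  map_add' f g := by
    ext a
    exact congrFun (Set.indicator_add H f.coeff g.coeff) a
  map_smul' d f := by
    ext a
    exact indicator_coeff_mul d.2 f a

theorem trunc_of_mem {f : Series G K} (hf : f ∈ supportedOn K H) : trunc H f = ⟨f, hf⟩ := by
  ext a
  exact congrFun (Set.indicator_eq_self.2 hf) a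

theorem trunc_eq_zero {f : Series G K} (hf : ∀ a ∈ H, f.coeff a = 0) : trunc H f = 0 := by
  ext a
  exact Set.indicator_apply_eq_zero.2 (hf a)

end SupportedOn

section DivisionRing

variable {G K : Type*} [Group G] [LinearOrder G] [MulLeftMono G] [MulRightMono G] [DivisionRing K]
  {H : Subgroup G}

theorem exists_mul_eq_one_supportedOn {d : supportedOn K H} (hd : d ≠ 0) :
    ∃ e, d * e = 1 := by
  obtain ⟨e, he⟩ := exists_mul_eq_one (f := (d : Series G K)) (by simpa using hd)
  refine ⟨trunc H e, ?_⟩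
  calc d * trunc H e = trunc H (d • e) := ((trunc H).map_smul d e).symm
    _ = trunc H 1 := congrArg _ he
    _ = 1 := trunc_of_mem (supportedOn K H).one_mem

noncomputable instance (H : Subgroup G) : DivisionRing (supportedOn K H) :=
  DivisionRing.ofIsUnitOrEqZero fun d => (eq_or_ne d 0).symm.imp_left <|
    isUnit_of_forall_exists_mul_eq_one fun _ => exists_mul_eq_one_supportedOn

end DivisionRing

end Series

/-! ### Derivations and dimensions -/

section FreeGroupBasis

variable {ι G : Type*} [Group G] (b : FreeGroupBasis ι G)

theorem closure_range_basis : Subgroup.closure (Set.range b) = ⊤ := by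
  have hlift : FreeGroup.lift b = b.repr.symm.toMonoidHom := by ext i; exact FreeGroup.lift_apply_of
  rw [← FreeGroup.lift_surjective_iff_closure_range_eq_top, hlift]
  exact b.repr.symm.surjective

theorem apply_eq_apply_one_of_forall_mul_basis {α : Type*} {f : G → α}
    (hf : ∀ g i, f (g * b i) = f g) (g : G) : f g = f 1 := by
  suffices h : ∀ k, f (k * g) = f k by simpa using h 1
  have hg : g ∈ Subgroup.closure (Set.range b) := closure_range_basis b ▸ Subgroup.mem_top g
  induction hg using Subgroup.closure_induction with
  | mem y hy =>
    obtain ⟨i, rfl⟩ := hy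
    exact fun k => hf k i
  | one => simp
  | mul y z _ _ hy hz => exact fun k => by rw [← mul_assoc, hz, hy]
  | inv y _ hy => exact fun k => by rw [← hy, inv_mul_cancel_right]

end FreeGroupBasis

/-- A derivation (crossed homomorphism) from a group `G` to a module on which `G` acts through a
homomorphism `u` to the ring of scalars. -/
structure IsDerivation {G R V : Type*} [Group G] [Ring R] [AddCommGroup V] [Module R V]
    (u : G →* R) (δ : G → V) : Prop where
  map_mul : ∀ g h, δ (g * h) = δ g + u g • δ h

namespace IsDerivation

variable {G R V : Type*} [Group G] [Ring R] [AddCommGroup V] [Module R V] {u : G →* R} {δ : G → V}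

theorem map_one (h : IsDerivation u δ) : δ 1 = 0 := by
  simpa using h.map_mul 1 1

theorem map_inv (h : IsDerivation u δ) (g : G) : δ g⁻¹ = -(u g⁻¹ • δ g) := by
  rw [eq_neg_iff_add_eq_zero, ← h.map_mul, inv_mul_cancel, h.map_one]

theorem map_mem_span (h : IsDerivation u δ) {R' : Subring R} {s : Set G}
    (hs : ∀ g ∈ Subgroup.closure s, u g ∈ R') {g : G} (hg : g ∈ Subgroup.closure s) :
    δ g ∈ Submodule.span R' (δ '' s) := by
  induction hg using Subgroup.closure_induction with
  | mem x hx => exact Submodule.subset_span ⟨x, hx, rfl⟩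
  | one => rw [h.map_one]; exact zero_mem _
  | mul x y hx hy ihx ihy =>
    rw [h.map_mul]
    exact add_mem ihx (Submodule.smul_mem _ (⟨u x, hs x hx⟩ : R') ihy)
  | inv x hx ihx =>
    rw [h.map_inv]
    exact neg_mem (Submodule.smul_mem _ (⟨u x⁻¹, hs _ (inv_mem hx)⟩ : R') ihx)

/-- A derivation into `V` is a section of the projection of the semidirect product `V ⋊ G` to `G`,
and such a section is freely determined by its values on a basis. -/
theorem exists_of_basis {ι : Type*} (b : FreeGroupBasis ι G) (u : G →* R) (f : ι → V) :
    ∃ δ : G → V, IsDerivation u δ ∧ ∀ i, δ (b i) = f i := by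
  let action : G →* MulAut (Multiplicative V) :=
    (MulAutMultiplicative V).symm.toMonoidHom.comp
      ((DistribMulAction.toAddAut Rˣ V).comp u.toHomUnits)
  let σ : G →* Multiplicative V ⋊[action] G := b.lift fun i => ⟨.ofAdd (f i), b i⟩
  have hσ (i : ι) : σ (b i) = ⟨.ofAdd (f i), b i⟩ := congrFun (b.lift.symm_apply_apply _) i
  have hright : SemidirectProduct.rightHom.comp σ = .id G :=
    b.ext_hom _ _ fun i => by simp [hσ]
  refine ⟨fun g => (σ g).left.toAdd, ⟨fun g h => ?_⟩, fun i => by simp [hσ]⟩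
  have hg : (σ g).right = g := DFunLike.congr_fun hright g
  rw [_root_.map_mul, SemidirectProduct.mul_left, hg]
  rfl

end IsDerivation

/-- The dimension of a vector space over a division ring, as an element of `ℕ∞`. -/
noncomputable def erank (D V : Type*) [DivisionRing D] [AddCommGroup V] [Module D V] : ℕ∞ :=
  Cardinal.toENat (Module.rank D V)

section Erank

variable {D V : Type*} [DivisionRing D] [AddCommGroup V] [Module D V]

theorem erank_mono {W W' : Submodule D V} (h : W ≤ W') : erank D W ≤ erank D W' :=
  OrderHomClass.mono Cardinal.toENat (Submodule.rank_mono h)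

theorem erank_span_le (s : Set V) : erank D (Submodule.span D s) ≤ s.encard :=
  OrderHomClass.mono Cardinal.toENat (rank_span_le s)

theorem card_le_erank_of_linearIndependent {ι : Type*} {v : ι → V} (hv : LinearIndependent D v) :
    ENat.card ι ≤ erank D V := by
  have := OrderHomClass.mono Cardinal.toENat hv.cardinal_lift_le_rank
  rwa [Cardinal.toENat_lift, Cardinal.toENat_lift] at this

theorem erank_eq_erank_ker_add_one {f : V →ₗ[D] D} (hf : f ≠ 0) :
    erank D V = erank D (LinearMap.ker f) + 1 := by
  have := congrArg Cardinal.toENat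
    (LinearMap.lift_rank_eq_of_surjective (LinearMap.surjective hf))
  simpa [erank, add_comm] using this

theorem erank_comap_subtype {W W' : Submodule D V} (h : W ≤ W') :
    erank D (W.comap W'.subtype) = erank D W :=
  congrArg Cardinal.toENat (Submodule.comapSubtypeEquivOfLe h).rank_eq

theorem erank_eq_erank_add_one_of_ker_eq {W W' : Submodule D V} (h : W ≤ W') {f : W' →ₗ[D] D}
    (hf : f ≠ 0) (hker : LinearMap.ker f = W.comap W'.subtype) : erank D W' = erank D W + 1 := by
  rw [erank_eq_erank_ker_add_one hf, hker, erank_comap_subtype h]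

theorem erank_le_card_of_injective {ι : Type*} {f : V →ₗ[D] ι → D} (hf : Function.Injective f) :
    erank D V ≤ ENat.card ι := by
  cases finite_or_infinite ι
  · have := Fintype.ofFinite ι
    have := OrderHomClass.mono Cardinal.toENat (LinearMap.lift_rank_le_of_injective f hf)
    simpa [erank, rank_fun'] using this
  · simp

theorem exists_linearMap_apply_eq {V' ι : Type*} [AddCommGroup V'] [Module D V'] {v : ι → V}
    (hv : LinearIndependent D v) (w : ι → V') : ∃ f : V →ₗ[D] V', ∀ i, f (v i) = w i := by
  obtain ⟨r, hr⟩ := (Finsupp.linearCombination D v).exists_leftInverse_of_injective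
    (LinearMap.ker_eq_bot.2 hv)
  refine ⟨Finsupp.linearCombination D w ∘ₗ r, fun i => ?_⟩
  have hi : r (v i) = Finsupp.single i 1 := by
    simpa using LinearMap.congr_fun hr (Finsupp.single i 1)
  simp [hi]

end Erank

/-! ### Fox derivatives and cycles -/

open Series

section Coordinates

variable {F K X : Type*} [Group F] [LinearOrder F] [MulLeftMono F] [MulRightMono F] [Ring K]

/-- The part of `v x` supported on the coset `H * g`, translated to `H`. As `x` and `g` vary, these
are coordinate functionals for the free module over all series, seen over the series supported
on `H`. -/
noncomputable def coordAt (H : Subgroup F) (x : X) (g : F) :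
    (X →₀ Series F K) →ₗ[supportedOn K H] supportedOn K H where
  toFun v := trunc H (v x * mono g⁻¹)
  map_add' v w := by rw [Finsupp.add_apply, add_mul, map_add]
  map_smul' d v := by
    have hsmul : (d • v) x * mono g⁻¹ = d • (v x * mono g⁻¹) := mul_assoc _ _ _
    rw [hsmul, map_smul, RingHom.id_apply]

variable {H : Subgroup F}

theorem coeff_coordAt (x : X) (g : F) (v : X →₀ Series F K) {h : F} (hh : h ∈ H) :
    (coordAt H x g v : Series F K).coeff h = (v x).coeff (h * g) := by
  refine (Set.indicator_of_mem hh _).trans ?_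
  rw [coeff_mul_mono, inv_inv]

theorem coordAt_single_mono_self (x : X) (g : F) :
    coordAt H x g (Finsupp.single x (mono g : Series F K)) = 1 := by
  change trunc H (Finsupp.single x (mono g) x * mono g⁻¹) = 1
  rw [Finsupp.single_eq_same, ← map_mul, mul_inv_cancel, map_one,
    trunc_of_mem (supportedOn K H).one_mem]
  rfl

theorem coordAt_single_mono_eq_zero {x y : X} {g h : F}
    (hne : y = x → ∀ k ∈ H, k * g ≠ h) :
    coordAt H x g (Finsupp.single y (mono h : Series F K)) = 0 := by
  classical
  refine trunc_eq_zero fun k hk => ?_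
  rw [coeff_mul_mono, inv_inv, Finsupp.single_apply]
  split_ifs with hyx
  · exact coeff_mono_of_ne (hne hyx k hk)
  · exact HahnSeries.coeff_zero

theorem linearIndependent_single_mono {T : Set F} (hT : Subgroup.IsComplement (H : Set F) T) :
    LinearIndependent (supportedOn K H)
      fun p : T × X => Finsupp.single p.2 (mono (p.1 : F) : Series F K) := by
  refine .of_pairwise_dual_eq_zero_one _ (fun p => coordAt H p.2 (p.1 : F)) ?_
    fun p => coordAt_single_mono_self p.2 (p.1 : F)
  rintro ⟨t, x⟩ ⟨t', x'⟩ hne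
  refine coordAt_single_mono_eq_zero fun hx k hk hkt => hne ?_
  have := hT.1 (a₁ := (⟨k, hk⟩, t)) (a₂ := (⟨1, H.one_mem⟩, t')) (by simpa using hkt)
  exact Prod.ext (congrArg Prod.snd this) hx.symm

end Coordinates

section Fox

variable (K : Type*) {F X : Type*} [Group F] [LinearOrder F] [MulLeftMono F] [MulRightMono F]
  [Ring K] (b : FreeGroupBasis X F)

/-- The total Fox derivative: the universal derivation of a free group, with coefficients extended
from the group ring to series. -/
noncomputable def fox : F → X →₀ Series F K :=
  (IsDerivation.exists_of_basis b (mono : F →* Series F K) fun x => Finsupp.single x 1).choose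

theorem isDerivation_fox : IsDerivation (mono : F →* Series F K) (fox K b) :=
  (IsDerivation.exists_of_basis b _ _).choose_spec.1

theorem fox_basis (x : X) : fox K b (b x) = Finsupp.single x 1 :=
  (IsDerivation.exists_of_basis b mono fun x => Finsupp.single x 1).choose_spec.2 x

/-- The boundary map of the Cayley graph of `F` (with coefficients extended to series), where the
basis vector at `x` is the edge from `1` to `b x`. -/
noncomputable def boundary : (X →₀ Series F K) →ₗ[Series F K] Series F K :=
  Finsupp.linearCombination (Series F K) fun x => mono (b x) - 1

theorem boundary_fox (g : F) : boundary K b (fox K b g) = mono g - 1 := by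
  have hstep (g : F) (x : X) :
      boundary K b (fox K b (g * b x)) - mono (g * b x) = boundary K b (fox K b g) - mono g := by
    rw [(isDerivation_fox K b).map_mul, map_add, map_smul, fox_basis, boundary,
      Finsupp.linearCombination_single, one_smul, smul_eq_mul, map_mul]
    noncomm_ring
  have h := apply_eq_apply_one_of_forall_mul_basis b
    (f := fun g => boundary K b (fox K b g) - mono g) hstep g
  simp only [(isDerivation_fox K b).map_one, map_zero, map_one, zero_sub] at h
  rw [sub_eq_iff_eq_add.1 h, neg_add_eq_sub]

/-- The span of the Fox derivatives of the elements of `H` over the series supported on `H`. -/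
noncomputable def foxSpan (H : Subgroup F) : Submodule (supportedOn K H) (X →₀ Series F K) :=
  Submodule.span _ (fox K b '' H)

/-- The elements of `foxSpan K b H` with trivial boundary. -/
noncomputable def cycles (H : Subgroup F) : Submodule (supportedOn K H) (X →₀ Series F K) :=
  foxSpan K b H ⊓ LinearMap.ker ((boundary K b).restrictScalars (supportedOn K H))

variable {K b} {H H' : Subgroup F} {w : X →₀ Series F K}

theorem mem_cycles : w ∈ cycles K b H ↔ w ∈ foxSpan K b H ∧ boundary K b w = 0 :=
  Iff.rfl

theorem boundary_smul (d : supportedOn K H) (w : X →₀ Series F K) :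
    boundary K b (d • w) = (d : Series F K) * boundary K b w :=
  map_smul (boundary K b) (d : Series F K) w

theorem fox_mem_foxSpan {h : F} (hh : h ∈ H) : fox K b h ∈ foxSpan K b H :=
  Submodule.subset_span ⟨h, hh, rfl⟩

theorem boundary_mem_supportedOn (hw : w ∈ foxSpan K b H) :
    boundary K b w ∈ supportedOn K H := by
  induction hw using Submodule.span_induction with
  | mem x hx =>
    obtain ⟨h, hh, rfl⟩ := hx
    rw [boundary_fox]
    exact sub_mem (mono_mem_supportedOn hh) (one_mem _)
  | zero => rw [map_zero]; exact zero_mem _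
  | add x y _ _ hx hy => rw [map_add]; exact add_mem hx hy
  | smul d x _ hx =>
    rw [boundary_smul]
    exact mul_mem d.2 hx

theorem foxSpan_mono (h : H ≤ H') (hw : w ∈ foxSpan K b H) : w ∈ foxSpan K b H' := by
  induction hw using Submodule.span_induction with
  | mem x hx =>
    obtain ⟨g, hg, rfl⟩ := hx
    exact fox_mem_foxSpan (h hg)
  | zero => exact zero_mem _
  | add x y _ _ hx hy => exact add_mem hx hy
  | smul d x _ hx => exact Submodule.smul_mem _ (⟨d, supportedOn_mono h d.2⟩ : supportedOn K H') hx

theorem cycles_mono (h : H ≤ H') (hw : w ∈ cycles K b H) : w ∈ cycles K b H' :=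
  ⟨foxSpan_mono h hw.1, hw.2⟩

theorem conj_mem_supportedOn {s : F} {d : Series F K}
    (hd : d ∈ supportedOn K (H.map (MulAut.conj s).toMonoidHom)) :
    mono s⁻¹ * d * mono s ∈ supportedOn K H := by
  intro a ha
  rw [coeff_mul_mono, coeff_mono_mul] at ha
  obtain ⟨h, hh, hsh⟩ := hd _ ha
  obtain rfl : h = a := by simpa [mul_assoc] using hsh
  exact hh

/-- The correction by `boundary K b w • fox K b s` comes from
`fox (s⁻¹ * h * s) = s⁻¹ • (fox h + (h - 1) • fox s)`; it vanishes on cycles. -/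
theorem conj_mem_foxSpan {s : F} (hw : w ∈ foxSpan K b (H.map (MulAut.conj s).toMonoidHom)) :
    (mono s⁻¹ : Series F K) • (w + boundary K b w • fox K b s) ∈ foxSpan K b H := by
  have hd := isDerivation_fox K b
  induction hw using Submodule.span_induction with
  | mem x hx =>
    obtain ⟨_, ⟨h, hh, rfl⟩, rfl⟩ := hx
    convert fox_mem_foxSpan hh using 1
    rw [boundary_fox]
    simp only [MulEquiv.toMonoidHom_eq_coe, MonoidHom.coe_coe, MulAut.conj_apply,
      hd.map_mul, hd.map_inv, smul_add, smul_neg, sub_smul, smul_sub, one_smul, smul_smul,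
      ← map_mul]
    simp only [mul_assoc, inv_mul_cancel_left, inv_mul_cancel, map_one, one_smul]
    abel
  | zero => simp
  | add x y _ _ hx hy =>
    convert add_mem hx hy using 1
    rw [map_add, ← smul_add, add_smul, add_add_add_comm]
  | smul d x _ hx =>
    have hconj : (mono s⁻¹ : Series F K) • (d • x + boundary K b (d • x) • fox K b s) =
        (mono s⁻¹ * (d : Series F K) * mono s) •
          (mono s⁻¹ : Series F K) • (x + boundary K b x • fox K b s) := by
      rw [smul_smul, mul_assoc _ (mono s), ← map_mul, mul_inv_cancel, map_one, mul_one, mul_smul,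
        boundary_smul, smul_add (d : Series F K), smul_smul (d : Series F K)]
      rfl
    rw [hconj]
    exact Submodule.smul_mem _ (⟨_, conj_mem_supportedOn d.2⟩ : supportedOn K H) hx

theorem conj_mem_cycles {s : F} (hw : w ∈ cycles K b (H.map (MulAut.conj s).toMonoidHom)) :
    (mono s⁻¹ : Series F K) • w ∈ cycles K b H := by
  obtain ⟨hspan, hzero⟩ := mem_cycles.1 hw
  have hconj := conj_mem_foxSpan hspan
  rw [hzero, zero_smul, add_zero] at hconj
  exact mem_cycles.2 ⟨hconj, by rw [map_smul, hzero, smul_zero]⟩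

end Fox

theorem exists_isComplement_decomposition {F : Type*} [Group F] (H : Subgroup F) :
    ∃ T : Set F, Subgroup.IsComplement (H : Set F) T ∧ ∃ (γ : F → H) (τ : F → T),
      (∀ g, (γ g : F) * τ g = g) ∧ (∀ (h : H) g, γ (h * g) = h * γ g) ∧ γ 1 = 1 := by
  obtain ⟨T, hT, hT₁⟩ := H.exists_isComplement_right 1
  exact ⟨T, hT, fun g => (hT.equiv g).1, fun g => (hT.equiv g).2, hT.equiv_fst_mul_equiv_snd,
    fun h g => congrArg Prod.fst (hT.equiv_mul_left h g),
    hT.equiv_fst_eq_self_of_mem_of_one_mem hT₁ H.one_mem⟩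

section Rank

variable (K : Type*) {F X : Type*} [Group F] [LinearOrder F] [MulLeftMono F] [MulRightMono F]
  [DivisionRing K] (b : FreeGroupBasis X F) (H : Subgroup F)

/-- The inclusion of a subgroup into the ring of series that it supports. -/
noncomputable def monoOn : H →* supportedOn K H :=
  (mono.comp H.subtype).codRestrict (supportedOn K H) fun h => mono_mem_supportedOn h.2

variable {K H}

/-- Restricted to a subgroup, the Fox derivative of the ambient group is still universal. -/
theorem exists_linearMap_fox_eq {δ : H → supportedOn K H} (hδ : IsDerivation (monoOn K H) δ) :
    ∃ ψ : (X →₀ Series F K) →ₗ[supportedOn K H] supportedOn K H,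
      ∀ h : H, ψ (fox K b h) = δ h := by
  obtain ⟨T, hT, γ, τ, hγτ, hγ, hγ₁⟩ := exists_isComplement_decomposition H
  have hbasis := linearIndependent_single_mono (K := K) (X := X) hT
  obtain ⟨ψ, hψ⟩ := exists_linearMap_apply_eq hbasis
    fun p : T × X => δ (γ (p.1 * b p.2))
  have hd := isDerivation_fox K b
  have hstep (g : F) (x : X) :
      ψ (fox K b (g * b x)) - δ (γ (g * b x)) = ψ (fox K b g) - δ (γ g) := by
    have hfox : (mono g : Series F K) • fox K b (b x) =
        monoOn K H (γ g) • Finsupp.single x (mono (τ g : F) : Series F K) := by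
      rw [fox_basis, Finsupp.smul_single, smul_eq_mul, mul_one, Finsupp.smul_single]
      congr 1
      conv_lhs => rw [← hγτ g, map_mul]
      rfl
    have hγmul : γ (g * b x) = γ g * γ (τ g * b x) := by
      rw [← hγ, ← mul_assoc, hγτ]
    rw [hd.map_mul, hfox, map_add, map_smul, hψ (τ g, x), hγmul, hδ.map_mul]
    abel
  refine ⟨ψ, fun h => ?_⟩
  have hγh : γ h = h := by rw [← mul_one (h : F), hγ, hγ₁, mul_one]
  have hconst : ψ (fox K b h) - δ (γ h) = ψ (fox K b 1) - δ (γ 1) :=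
    apply_eq_apply_one_of_forall_mul_basis b (f := fun g => ψ (fox K b g) - δ (γ g)) hstep h
  rwa [hγh, hγ₁, hd.map_one, hδ.map_one, map_zero, sub_zero, sub_eq_zero] at hconst

theorem linearIndependent_fox {I : Type*} (c : FreeGroupBasis I H) :
    LinearIndependent (supportedOn K H) fun i => fox K b (c i : F) := by
  classical
  have hdual (i : I) : ∃ ψ : (X →₀ Series F K) →ₗ[supportedOn K H] supportedOn K H,
      ∀ j, ψ (fox K b (c j : F)) = if i = j then 1 else 0 := by
    obtain ⟨δ, hδ, hδc⟩ := IsDerivation.exists_of_basis c (monoOn K H)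
      fun j => if i = j then (1 : supportedOn K H) else 0
    obtain ⟨ψ, hψ⟩ := exists_linearMap_fox_eq b hδ
    exact ⟨ψ, fun j => by rw [hψ, hδc]⟩
  choose ψ hψ using hdual
  exact .of_pairwise_dual_eq_zero_one _ ψ (fun i j hij => by simp only [hψ, if_neg hij])
    fun i => by simp only [hψ, if_pos]

end Rank

/-! ### Dimensions and ranks -/

theorem grank_le_card_of_basis {I G : Type*} [Group G] (c : FreeGroupBasis I G) :
    grank G ≤ ENat.card I := by
  classical
  cases finite_or_infinite I
  · have := Fintype.ofFinite I
    have hgrank : grank G ≤ (Finset.univ.image c).card :=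
      sInf_le ⟨Finset.univ.image c, by simp [closure_range_basis], rfl⟩
    rw [ENat.card_eq_coe_fintype_card]
    exact hgrank.trans (Nat.cast_le.2 Finset.card_image_le)
  · simp

theorem redRank_ne_top (G : Type*) [Group G] [Group.FG G] : redRank G ≠ ⊤ := by
  obtain ⟨s, hs⟩ := Group.FG.out (G := G)
  have hgrank : grank G ≤ s.card := sInf_le ⟨s, hs, rfl⟩
  exact ne_top_of_le_ne_top (ENat.natCast_ne_top s.card) (tsub_le_self.trans hgrank)

section Dimension

variable {K F X : Type*} [Group F] [LinearOrder F] [MulLeftMono F] [MulRightMono F]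
  [DivisionRing K] (b : FreeGroupBasis X F) {H : Subgroup F}

theorem erank_foxSpan_le_encard {s : Set H} (hs : Subgroup.closure s = ⊤) :
    erank (supportedOn K H) (foxSpan K b H) ≤ s.encard := by
  have hclosure : Subgroup.closure (Subtype.val '' s) = H := by
    rw [← Subgroup.coe_subtype, ← MonoidHom.map_closure, hs, ← MonoidHom.range_eq_map,
      Subgroup.range_subtype]
  have hspan : foxSpan K b H ≤
      Submodule.span (supportedOn K H) (fox K b '' (Subtype.val '' s)) := by
    refine Submodule.span_le.2 ?_
    rintro _ ⟨h, hh, rfl⟩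
    refine (isDerivation_fox K b).map_mem_span (fun g hg => ?_) (by rwa [hclosure])
    exact mono_mem_supportedOn (hclosure.le hg)
  exact (erank_mono hspan).trans <| (erank_span_le _).trans <|
    (Set.encard_image_le _ _).trans (Set.encard_image_le _ _)

variable (K H)

theorem erank_foxSpan : erank (supportedOn K H) (foxSpan K b H) = grank H := by
  apply le_antisymm
  · refine le_sInf ?_
    rintro _ ⟨s, hs, rfl⟩
    rw [← Set.encard_coe_eq_coe_finsetCard]
    exact erank_foxSpan_le_encard b hs
  · have := b.isFreeGroup
    let c := IsFreeGroup.basis H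
    have hfox : LinearIndependent (supportedOn K H)
        fun i => (⟨_, fox_mem_foxSpan (c i).2⟩ : foxSpan K b H) :=
      .of_comp (foxSpan K b H).subtype (linearIndependent_fox b c)
    exact (grank_le_card_of_basis c).trans (card_le_erank_of_linearIndependent hfox)

/-- The boundary map on `foxSpan K b H`, where it takes values in the series supported on `H`. -/
noncomputable def boundaryOn : foxSpan K b H →ₗ[supportedOn K H] supportedOn K H :=
  trunc H ∘ₗ (boundary K b).restrictScalars (supportedOn K H) ∘ₗ (foxSpan K b H).subtype

variable {K H}

theorem coe_boundaryOn (w : foxSpan K b H) :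
    (boundaryOn K b H w : Series F K) = boundary K b w :=
  congrArg Subtype.val (trunc_of_mem (boundary_mem_supportedOn w.2))

theorem boundaryOn_ne_zero (hH : H ≠ ⊥) : boundaryOn K b H ≠ 0 := by
  obtain ⟨h, hh, hne⟩ := H.bot_or_exists_ne_one.resolve_left hH
  intro hzero
  have hboundary := coe_boundaryOn b (⟨_, fox_mem_foxSpan hh⟩ : foxSpan K b H)
  rw [hzero, boundary_fox] at hboundary
  exact hne (mono_injective ((sub_eq_zero.1 hboundary.symm).trans (map_one mono).symm))

variable (K H)

theorem ker_boundaryOn :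
    LinearMap.ker (boundaryOn K b H) = (cycles K b H).comap (foxSpan K b H).subtype := by
  ext w
  rw [LinearMap.mem_ker, ← Subtype.coe_inj, coe_boundaryOn]
  exact ⟨fun h => ⟨w.2, h⟩, fun h => h.2⟩

theorem erank_cycles : erank (supportedOn K H) (cycles K b H) = redRank H := by
  rw [redRank, ← erank_foxSpan K b H]
  have hle : cycles K b H ≤ foxSpan K b H := inf_le_left
  by_cases hH : H = ⊥
  · have hspan : erank (supportedOn K H) (foxSpan K b H) ≤ 0 := by
      subst hH
      exact (erank_foxSpan_le_encard b (s := ∅) (Subsingleton.elim _ _)).trans_eq Set.encard_empty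
    have hcycles : erank (supportedOn K H) (cycles K b H) ≤ 0 := (erank_mono hle).trans hspan
    rw [nonpos_iff_eq_zero.1 hspan, nonpos_iff_eq_zero.1 hcycles, zero_tsub]
  · rw [erank_eq_erank_add_one_of_ker_eq hle (boundaryOn_ne_zero b hH) (ker_boundaryOn K b H)]
    exact ((ENat.addLECancellable_of_ne_top ENat.one_ne_top).add_tsub_cancel_right).symm

end Dimension

/-! ### Leads -/

/-- The position `(x, g)` modulo the action of `H` by left multiplication on the second factor. -/
def cosetOf {F X : Type*} [Group F] (H : Subgroup F) (e : X × F) :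
    X × Quotient (QuotientGroup.rightRel H) :=
  (e.1, Quotient.mk _ e.2)

theorem cosetOf_eq_iff {F X : Type*} [Group F] {H : Subgroup F} {e e' : X × F} :
    cosetOf H e = cosetOf H e' ↔ e.1 = e'.1 ∧ e'.2 * e.2⁻¹ ∈ H := by
  rw [cosetOf, cosetOf, Prod.mk.injEq, Quotient.eq, QuotientGroup.rightRel_apply]

theorem cosetOf_mul_left {F X : Type*} [Group F] {H : Subgroup F} {h : F} (hh : h ∈ H)
    (e : X × F) : cosetOf H (e.1, h * e.2) = cosetOf H e :=
  cosetOf_eq_iff.2 ⟨rfl, by simpa using hh⟩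

section Lead

variable {F K X : Type*} [LinearOrder F]

/-- The coefficient of a vector of series at a position `(x, g)`. -/
def coeffAt [Ring K] (e : X × F) : (X →₀ Series F K) →+ K where
  toFun v := (v e.1).coeff e.2
  map_zero' := rfl
  map_add' _ _ := rfl

/-- The lexicographically smallest position at which a vector of series has a nonzero
coefficient. -/
structure IsLead [Ring K] [LinearOrder X] (v : X →₀ Series F K) (e : X × F) : Prop where
  coeffAt_ne_zero : coeffAt e v ≠ 0
  coeffAt_eq_zero_of_lt : ∀ e', toLex e' < toLex e → coeffAt e' v = 0

variable [LinearOrder X]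

section Ring

variable [Ring K]

theorem exists_isLead {v : X →₀ Series F K} (hv : v ≠ 0) : ∃ e, IsLead v e := by
  have hne := Finsupp.support_nonempty_iff.2 hv
  obtain ⟨g, hg, hmin⟩ := exists_coeff_ne_zero_forall_lt
    (Finsupp.mem_support_iff.1 (v.support.min'_mem hne))
  refine ⟨(v.support.min' hne, g), hg, fun e he => ?_⟩
  obtain hx | ⟨hx, hlt⟩ := Prod.Lex.toLex_lt_toLex.1 he
  · have hve : v e.1 = 0 := Finsupp.notMem_support_iff.1 fun hmem =>
      (v.support.min'_le _ hmem).not_gt hx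
    exact congrArg (fun f : Series F K => f.coeff e.2) hve
  · exact (congrArg (fun x => (v x).coeff e.2) hx).trans (hmin _ hlt)

theorem sum_ne_zero_of_isLead {ι : Type*} {s : Finset ι} (hs : s.Nonempty)
    {v : ι → X →₀ Series F K} {e : ι → X × F} (hv : ∀ i ∈ s, IsLead (v i) (e i))
    (he : Set.InjOn e s) : ∑ i ∈ s, v i ≠ 0 := by
  obtain ⟨i, hi, hmin⟩ := s.exists_min_image (fun i => toLex (e i)) hs
  have hother : ∀ j ∈ s, j ≠ i → coeffAt (e i) (v j) = 0 := fun j hj hji =>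
    (hv j hj).coeffAt_eq_zero_of_lt _ <| (hmin j hj).lt_of_ne fun heq =>
      hji (he hj hi (toLex.injective heq.symm))
  intro hzero
  apply (hv i hi).coeffAt_ne_zero
  rw [← Finset.sum_eq_single_of_mem i hi hother, ← map_sum, hzero, map_zero]

end Ring

variable [Group F] [MulLeftMono F] [MulRightMono F] [DivisionRing K]

theorem IsLead.smul {v : X →₀ Series F K} {e : X × F} (h : IsLead v e) {d : Series F K}
    (hd : d ≠ 0) : ∃ k, d.coeff k ≠ 0 ∧ IsLead (d • v) (e.1, k * e.2) := by
  obtain ⟨k, hk, hmin⟩ := exists_coeff_ne_zero_forall_lt hd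
  have hve : ∀ g < e.2, (v e.1).coeff g = 0 := fun g hg =>
    h.coeffAt_eq_zero_of_lt (e.1, g) (Prod.Lex.toLex_lt_toLex.2 (.inr ⟨rfl, hg⟩))
  refine ⟨k, hk, ?_, fun e' he' => ?_⟩
  · exact (coeff_mul_mul_of_forall_lt hmin hve).trans_ne (mul_ne_zero hk h.coeffAt_ne_zero)
  obtain hx | ⟨hx, hlt⟩ := Prod.Lex.toLex_lt_toLex.1 he'
  · have hv : v e'.1 = 0 := HahnSeries.ext <| funext fun g =>
      h.coeffAt_eq_zero_of_lt (e'.1, g) (Prod.Lex.toLex_lt_toLex.2 (.inl hx))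
    change (d * v e'.1).coeff e'.2 = 0
    rw [hv, mul_zero, HahnSeries.coeff_zero]
  · change (d * v e'.1).coeff e'.2 = 0
    rw [show e'.1 = e.1 from hx]
    exact coeff_mul_eq_zero_of_lt hmin hve hlt

theorem IsLead.mono_smul {v : X →₀ Series F K} {e : X × F} (h : IsLead v e) (g : F) :
    IsLead ((mono g : Series F K) • v) (e.1, g * e.2) := by
  have hmono : (mono g : Series F K) ≠ 0 := ((Group.isUnit g).map mono).ne_zero
  obtain ⟨k, hk, hlead⟩ := h.smul hmono
  obtain rfl : k = g := by_contra fun hne => hk (coeff_mono_of_ne hne)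
  exact hlead

variable {H : Subgroup F}

theorem linearIndependent_of_isLead {ι : Type*} {z : ι → X →₀ Series F K}
    {e : ι → X × F} (hz : ∀ i, IsLead (z i) (e i))
    (he : Function.Injective fun i => cosetOf H (e i)) :
    LinearIndependent (supportedOn K H) z := by
  classical
  rw [linearIndependent_iff']
  intro s d hsum
  by_contra! ⟨i, hi, hdi⟩
  have hlead (j : ι) (hj : d j ≠ 0) :
      ∃ p, IsLead (d j • z j) p ∧ cosetOf H p = cosetOf H (e j) := by
    obtain ⟨k, hk, hlead⟩ := (hz j).smul (d := (d j : Series F K)) (by simpa using hj)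
    exact ⟨_, hlead, cosetOf_mul_left ((d j).2 k hk) (e j)⟩
  have : Nonempty (X × F) := ⟨e i⟩
  choose! p hp hpe using hlead
  refine sum_ne_zero_of_isLead (s := s.filter fun j => d j ≠ 0) (v := fun j => d j • z j) (e := p)
    ⟨i, Finset.mem_filter.2 ⟨hi, hdi⟩⟩ (fun j hj => hp j (Finset.mem_filter.1 hj).2)
    (fun j hj j' hj' hjj => he ?_) ?_
  · change cosetOf H (e j) = cosetOf H (e j')
    rw [← hpe j (Finset.mem_filter.1 hj).2, hjj, hpe j' (Finset.mem_filter.1 hj').2]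
  · rw [← hsum]
    refine Finset.sum_filter_of_ne fun j _ hj hdj => hj ?_
    rw [hdj, zero_smul]

/-- The leads of the vectors in `W`. -/
def leads (W : Submodule (supportedOn K H) (X →₀ Series F K)) : Set (X × F) :=
  {e | ∃ w ∈ W, IsLead w e}

variable (W : Submodule (supportedOn K H) (X →₀ Series F K))

theorem encard_image_cosetOf_leads_le_erank :
    (cosetOf H '' leads W).encard ≤ erank (supportedOn K H) W := by
  choose e he hq using fun q : cosetOf H '' leads W => q.2
  choose w hw hlead using he
  have hli : LinearIndependent (supportedOn K H) w :=
    linearIndependent_of_isLead hlead fun q q' h => Subtype.ext (by simpa only [hq] using h)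
  exact card_le_erank_of_linearIndependent (v := fun q => (⟨w q, hw q⟩ : W))
    (.of_comp W.subtype hli)

variable {W}

theorem eq_zero_of_forall_coordAt_eq_zero {e : cosetOf H '' leads W → X × F}
    (he : ∀ q, cosetOf H (e q) = q) {w : X →₀ Series F K} (hw : w ∈ W)
    (hcoord : ∀ q, coordAt H (e q).1 (e q).2 w = 0) : w = 0 := by
  by_contra hne
  obtain ⟨p, hp⟩ := exists_isLead hne
  let q : cosetOf H '' leads W := ⟨cosetOf H p, p, ⟨w, hw, hp⟩, rfl⟩
  obtain ⟨hx, hg⟩ := cosetOf_eq_iff.1 (he q)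
  have hcoeff := coeff_coordAt (e q).1 (e q).2 w hg
  rw [hcoord, inv_mul_cancel_right, hx] at hcoeff
  exact hp.coeffAt_ne_zero hcoeff.symm

variable (W)

theorem erank_le_encard_image_cosetOf_leads :
    erank (supportedOn K H) W ≤ (cosetOf H '' leads W).encard := by
  choose e _ he using fun q : cosetOf H '' leads W => q.2
  let φ : W →ₗ[supportedOn K H] cosetOf H '' leads W → supportedOn K H :=
    LinearMap.pi fun q => coordAt H (e q).1 (e q).2 ∘ₗ W.subtype
  have hφ : Function.Injective φ := LinearMap.ker_eq_bot.1 <| LinearMap.ker_eq_bot'.2 fun w hw =>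
    Subtype.ext (eq_zero_of_forall_coordAt_eq_zero he w.2 (congrFun hw))
  exact erank_le_card_of_injective hφ

theorem encard_image_cosetOf_leads :
    (cosetOf H '' leads W).encard = erank (supportedOn K H) W :=
  (encard_image_cosetOf_leads_le_erank W).antisymm (erank_le_encard_image_cosetOf_leads W)

end Lead

/-! ### Counting leads over double cosets -/

section Counting

theorem sum_encard_le_encard {ι α β : Type*} {T : Finset ι} {s : ι → Set α} {t : Set β}
    {φ : ι → α → β} (hmaps : ∀ i, Set.MapsTo (φ i) (s i) t)
    (hinj : ∀ i, Set.InjOn (φ i) (s i))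
    (hdisj : ∀ i ∈ T, ∀ j ∈ T, ∀ a a', φ i a = φ j a' → i = j) :
    ∑ i ∈ T, (s i).encard ≤ t.encard := by
  have hpairwise : (T : Set ι).PairwiseDisjoint fun i => φ i '' s i := by
    refine fun i hi j hj hij => Set.disjoint_left.2 ?_
    rintro _ ⟨a, -, rfl⟩ ⟨a', -, h⟩
    exact hij (hdisj i hi j hj a a' h.symm)
  calc ∑ i ∈ T, (s i).encard = ∑ i ∈ T, (φ i '' s i).encard :=
        Finset.sum_congr rfl fun i _ => (hinj i).encard_image.symm
    _ = (⋃ i ∈ T, φ i '' s i).encard := by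
        rw [← finsum_mem_coe_finset, ← T.finite_toSet.encard_biUnion hpairwise]
        rfl
    _ ≤ t.encard := Set.encard_le_encard (Set.iUnion₂_subset fun i _ => (hmaps i).image_subset)

theorem finite_and_finsum_mem_le_of_forall_sum_le {α : Type*} {S : Set α} {f : α → ℕ∞} {N : ℕ∞}
    (hN : N ≠ ⊤) (h : ∀ T : Finset α, (T : Set α) ⊆ S → ∑ a ∈ T, f a ≤ N) :
    {a ∈ S | f a ≠ 0}.Finite ∧ ∑ᶠ a ∈ S, f a ≤ N := by
  lift N to ℕ using hN
  have hfin : (S ∩ Function.support f).Finite := by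
    by_contra hinf
    obtain ⟨T, hT, hcard⟩ := Set.Infinite.exists_subset_card_eq hinf (N + 1)
    have hle : ((N + 1 : ℕ) : ℕ∞) ≤ N :=
      calc ((N + 1 : ℕ) : ℕ∞) = ∑ a ∈ T, 1 := by rw [Finset.sum_const, hcard, nsmul_one]
        _ ≤ ∑ a ∈ T, f a := Finset.sum_le_sum fun a ha => Order.one_le_iff_ne_zero.2 (hT ha).2
        _ ≤ N := h T fun a ha => (hT ha).1
    exact (Nat.lt_succ_self N).not_ge (Nat.cast_le.1 hle)
  refine ⟨hfin, ?_⟩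
  rw [finsum_mem_eq_sum f hfin]
  exact h _ fun a ha => (hfin.mem_toFinset.1 ha).1

end Counting

section DoubleCosets

variable {F X : Type*} [Group F] (A B : Subgroup F)

theorem injOn_mk_of_existsUnique {S : Set F}
    (hS : ∀ g : F, ∃! s, s ∈ S ∧ ∃ a ∈ A, ∃ b ∈ B, g = a * s * b) :
    Set.InjOn (DoubleCoset.mk A B) S := fun s hs t ht hst =>
  (hS t).unique ⟨hs, (DoubleCoset.eq A B s t).1 hst⟩
    ⟨ht, 1, A.one_mem, 1, B.one_mem, by rw [one_mul, mul_one]⟩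

/-- The map sending the position `(x, g)`, taken modulo `A ⊓ s B s⁻¹`, to the coset positions
`(x, A g)` and `(x, B s⁻¹ g)`. -/
def cosetPair (s : F) (e : X × F) :
    (X × Quotient (QuotientGroup.rightRel A)) × (X × Quotient (QuotientGroup.rightRel B)) :=
  (cosetOf A e, cosetOf B (e.1, s⁻¹ * e.2))

variable {A B} {s t : F} {e e' : X × F}

theorem cosetPair_eq_iff : cosetPair A B s e = cosetPair A B t e' ↔
    e.1 = e'.1 ∧ e'.2 * e.2⁻¹ ∈ A ∧ t⁻¹ * (e'.2 * e.2⁻¹) * s ∈ B := by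
  simp only [cosetPair, Prod.mk.injEq, cosetOf_eq_iff, mul_inv_rev, inv_inv, mul_assoc]
  tauto

theorem mk_eq_mk_of_cosetPair_eq (h : cosetPair A B s e = cosetPair A B t e') :
    DoubleCoset.mk A B s = DoubleCoset.mk A B t := by
  obtain ⟨-, hA, hB⟩ := cosetPair_eq_iff.1 h
  exact (DoubleCoset.eq A B s t).2 ⟨_, hA, _, B.inv_mem hB, by group⟩

theorem cosetOf_eq_of_cosetPair_eq (h : cosetPair A B s e = cosetPair A B s e') :
    cosetOf (A ⊓ B.map (MulAut.conj s).toMonoidHom) e =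
      cosetOf (A ⊓ B.map (MulAut.conj s).toMonoidHom) e' := by
  obtain ⟨hx, hA, hB⟩ := cosetPair_eq_iff.1 h
  exact cosetOf_eq_iff.2 ⟨hx, hA, _, hB, by simp [mul_assoc]⟩

end DoubleCosets

section Cycles

variable (K : Type*) {F X : Type*} [Group F] [LinearOrder F] [MulLeftMono F] [MulRightMono F]
  [DivisionRing K] [LinearOrder X] (b : FreeGroupBasis X F)

theorem encard_image_cosetOf_leads_cycles (H : Subgroup F) :
    (cosetOf H '' leads (cycles K b H)).encard = redRank H :=
  (encard_image_cosetOf_leads _).trans (erank_cycles K b H)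

theorem exists_subset_leads_cycles_injOn (H : Subgroup F) :
    ∃ R ⊆ leads (cycles K b H), Set.InjOn (cosetOf H) R ∧ R.encard = redRank H := by
  obtain ⟨R, hR, hbij⟩ := (leads (cycles K b H)).exists_subset_bijOn (cosetOf H)
  refine ⟨R, hR, hbij.injOn, ?_⟩
  rw [← hbij.injOn.encard_image, hbij.image_eq, encard_image_cosetOf_leads_cycles]

theorem mapsTo_cosetPair_leads (A B : Subgroup F) (s : F) :
    Set.MapsTo (cosetPair A B s) (leads (cycles K b (A ⊓ B.map (MulAut.conj s).toMonoidHom)))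
      ((cosetOf A '' leads (cycles K b A)) ×ˢ (cosetOf B '' leads (cycles K b B))) := by
  rintro e ⟨w, hw, he⟩
  exact ⟨⟨e, ⟨w, cycles_mono inf_le_left hw, he⟩, rfl⟩,
    ⟨_, ⟨_, conj_mem_cycles (cycles_mono inf_le_right hw), he.mono_smul s⁻¹⟩, rfl⟩⟩

end Cycles

end HannaNeumann

open HannaNeumann in
theorem strengthened_hanna_neumann_general {F : Type*} [Group F] [IsFreeGroup F]
    (A B : Subgroup F) (T : Finset F) (hT : Set.InjOn (DoubleCoset.mk A B) T) :
    ∑ s ∈ T, redRank ↥(A ⊓ B.map (MulAut.conj s).toMonoidHom) ≤ redRank A * redRank B := by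
  obtain ⟨_, _, _⟩ := exists_biorder F
  let _ : LinearOrder (IsFreeGroup.Generators F) := IsWellOrder.linearOrder WellOrderingRel
  let b := IsFreeGroup.basis F
  choose R hR hinj hcard using fun s : F =>
    exists_subset_leads_cycles_injOn ℚ b (A ⊓ B.map (MulAut.conj s).toMonoidHom)
  calc ∑ s ∈ T, redRank ↥(A ⊓ B.map (MulAut.conj s).toMonoidHom)
      = ∑ s ∈ T, (R s).encard := Finset.sum_congr rfl fun s _ => (hcard s).symm
    _ ≤ ((cosetOf A '' leads (cycles ℚ b A)) ×ˢ (cosetOf B '' leads (cycles ℚ b B))).encard :=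
        sum_encard_le_encard (fun s => (mapsTo_cosetPair_leads ℚ b A B s).mono_left (hR s))
          (fun s _ he _ he' h => hinj s he he' (cosetOf_eq_of_cosetPair_eq h))
          fun _ hs _ ht _ _ h => hT hs ht (mk_eq_mk_of_cosetPair_eq h)
    _ = redRank A * redRank B := by
        rw [Set.encard_prod, encard_image_cosetOf_leads_cycles, encard_image_cosetOf_leads_cycles]

/-- The strengthened Hanna Neumann conjecture (Friedman–Mineyev theorem): for finitely
generated subgroups `A, B` of a free group `F` and a system of representatives `S` of the
double cosets `AsB` in `F`, one has `∑_{s ∈ S} r̄ank(A ∩ sBs⁻¹) ≤ r̄ank(A) ⬝ r̄ank(B)`;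
in particular, only finitely many terms of the sum are nonzero. -/
theorem strengthened_hanna_neumann {F : Type*} [Group F] [IsFreeGroup F]
    (A B : Subgroup F) [Group.FG A] [Group.FG B] (S : Set F)
    (hS : ∀ g : F, ∃! s, s ∈ S ∧ ∃ a ∈ A, ∃ b ∈ B, g = a * s * b) :
    {s ∈ S | redRank ↥(A ⊓ Subgroup.map (MulAut.conj s).toMonoidHom B) ≠ 0}.Finite ∧
      ∑ᶠ s ∈ S, redRank ↥(A ⊓ Subgroup.map (MulAut.conj s).toMonoidHom B) ≤
        redRank A * redRank B :=
  HannaNeumann.finite_and_finsum_mem_le_of_forall_sum_le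
    (WithTop.mul_ne_top (HannaNeumann.redRank_ne_top A) (HannaNeumann.redRank_ne_top B))
    fun T hT => strengthened_hanna_neumann_general A B T
      ((HannaNeumann.injOn_mk_of_existsUnique A B hS).mono hT)
end
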